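/- arXiv:1401.7698 — 5 statements merged into one kernel-verified Lean document; each statement's English description precedes it below -/
import Mathlib

section
/- Let ρ, ρ† : ℝ × ℝ³ → ℝ and V, B, V†, B† : ℝ × ℝ³ → ℝ³ be smooth functions with ρ(t,x) > 0 for all (t,x), and suppose there is a compact set K ⊆ ℝ³ such that V(t,·), B(t,·), V†(t,·), B†(t,·) all vanish outside K for every t. Assume that for all (t,x): ∂ₜV = −∇ρ† − ρ⁻¹((∇×V)×V†) + ρ⁻¹((∇×B†)×B), ∂ₜB = ∇×(ρ⁻¹ V† × B), and ∇·B = 0. Then the cross helicity t ↦ ∫_{ℝ³} V(t,x)·B(t,x) dx is constant in t. -/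
open MeasureTheory

/-- `i`-th spatial partial derivative of a scalar field on ℝ³. -/
noncomputable def pd3 (i : Fin 3) (f : (Fin 3 → ℝ) → ℝ) (x : Fin 3 → ℝ) : ℝ :=
  fderiv ℝ f x (Pi.single i 1)

/-- Gradient of a scalar field on ℝ³. -/
noncomputable def grad3 (f : (Fin 3 → ℝ) → ℝ) (x : Fin 3 → ℝ) : Fin 3 → ℝ :=
  fun i => pd3 i f x

/-- Divergence of a vector field on ℝ³. -/
noncomputable def div3 (F : (Fin 3 → ℝ) → (Fin 3 → ℝ)) (x : Fin 3 → ℝ) : ℝ :=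
  ∑ i, pd3 i (fun y => F y i) x

/-- Curl of a vector field on ℝ³. -/
noncomputable def curl3 (F : (Fin 3 → ℝ) → (Fin 3 → ℝ)) (x : Fin 3 → ℝ) : Fin 3 → ℝ :=
  ![pd3 1 (fun y => F y 2) x - pd3 2 (fun y => F y 1) x,
    pd3 2 (fun y => F y 0) x - pd3 0 (fun y => F y 2) x,
    pd3 0 (fun y => F y 1) x - pd3 1 (fun y => F y 0) x]

/-- Cross product on ℝ³. -/
def cross3 (a b : Fin 3 → ℝ) : Fin 3 → ℝ :=
  ![a 1 * b 2 - a 2 * b 1, a 2 * b 0 - a 0 * b 2, a 0 * b 1 - a 1 * b 0]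

/-- Euclidean dot product on ℝ³. -/
def dot3 (a b : Fin 3 → ℝ) : ℝ := ∑ i, a i * b i

/-!
With `u = ρ⁻¹ V†`, `J = ρ⁻¹ (∇ × B†)` and `E = u × B`, the equations of motion read
`∂ₜV = -∇ρ† - (∇ × V) × u + J × B` and `∂ₜB = ∇ × E`. The force `J × B` is orthogonal to `B`,
and `((∇ × V) × u) · B = E · (∇ × V)`, so `div B = 0` turns the evolution of the density `V · B`
into the local conservation law `∂ₜ(V · B) = div (E × V - ρ† B)`. The flux vanishes wherever `B`
does, so the divergence integrates to zero.
-/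

section VectorAlgebra

open scoped Matrix

lemma dot3_eq_dotProduct (a b : Fin 3 → ℝ) : dot3 a b = a ⬝ᵥ b := rfl

lemma cross3_eq_crossProduct (a b : Fin 3 → ℝ) : cross3 a b = a ⨯₃ b := rfl

lemma smul_cross3 (c : ℝ) (a b : Fin 3 → ℝ) : cross3 (c • a) b = c • cross3 a b := by
  simp only [cross3_eq_crossProduct, map_smul, LinearMap.smul_apply]

lemma cross3_smul (c : ℝ) (a b : Fin 3 → ℝ) : cross3 a (c • b) = c • cross3 a b := by
  simp only [cross3_eq_crossProduct, map_smul]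

lemma dot3_cross3_right_self (a b : Fin 3 → ℝ) : dot3 (cross3 a b) b = 0 := by
  rw [dot3_eq_dotProduct, cross3_eq_crossProduct, dotProduct_comm, dot_cross_self]

lemma dot3_cross3_rotate (a b c : Fin 3 → ℝ) : dot3 (cross3 a b) c = dot3 (cross3 b c) a := by
  simp only [dot3_eq_dotProduct, cross3_eq_crossProduct]
  rw [dotProduct_comm, triple_product_permutation, dotProduct_comm]

lemma dot3_comm (a b : Fin 3 → ℝ) : dot3 a b = dot3 b a := dotProduct_comm a b

lemma dot3_mhd_force (g ω u J b : Fin 3 → ℝ) :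
    dot3 (-g - cross3 ω u + cross3 J b) b = -dot3 g b - dot3 (cross3 u b) ω := by
  calc dot3 (-g - cross3 ω u + cross3 J b) b
      = -dot3 g b - dot3 (cross3 ω u) b + dot3 (cross3 J b) b := by
        simp only [dot3_eq_dotProduct, add_dotProduct, sub_dotProduct, neg_dotProduct]
    _ = -dot3 g b - dot3 (cross3 u b) ω := by
        rw [dot3_cross3_right_self, add_zero, dot3_cross3_rotate]

end VectorAlgebra

section VectorCalculus

variable {f g : (Fin 3 → ℝ) → ℝ} {F G : (Fin 3 → ℝ) → (Fin 3 → ℝ)} {x : Fin 3 → ℝ}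

lemma pd3_mul (i : Fin 3) (hf : DifferentiableAt ℝ f x) (hg : DifferentiableAt ℝ g x) :
    pd3 i (fun y => f y * g y) x = pd3 i f x * g x + f x * pd3 i g x := by
  simp only [pd3, fderiv_fun_mul hf hg, add_apply, smul_apply, smul_eq_mul]
  ring

lemma pd3_sub (i : Fin 3) (hf : DifferentiableAt ℝ f x) (hg : DifferentiableAt ℝ g x) :
    pd3 i (fun y => f y - g y) x = pd3 i f x - pd3 i g x := by
  simp only [pd3, fderiv_fun_sub hf hg, sub_apply]

lemma pd3_mul_sub_mul {a b c d : (Fin 3 → ℝ) → ℝ} (i : Fin 3) (ha : DifferentiableAt ℝ a x)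
    (hb : DifferentiableAt ℝ b x) (hc : DifferentiableAt ℝ c x) (hd : DifferentiableAt ℝ d x) :
    pd3 i (fun y => a y * b y - c y * d y) x =
      pd3 i a x * b x + a x * pd3 i b x - (pd3 i c x * d x + c x * pd3 i d x) := by
  rw [pd3_sub i (ha.fun_mul hb) (hc.fun_mul hd), pd3_mul i ha hb, pd3_mul i hc hd]

lemma div3_sub (hF : DifferentiableAt ℝ F x) (hG : DifferentiableAt ℝ G x) :
    div3 (fun y => F y - G y) x = div3 F x - div3 G x := by
  simp only [div3, Pi.sub_apply, ← Finset.sum_sub_distrib]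
  exact Finset.sum_congr rfl fun i _ =>
    pd3_sub i (differentiableAt_pi.1 hF i) (differentiableAt_pi.1 hG i)

lemma div3_smul (hf : DifferentiableAt ℝ f x) (hF : DifferentiableAt ℝ F x) :
    div3 (fun y => f y • F y) x = dot3 (grad3 f x) (F x) + f x * div3 F x := by
  simp only [div3, dot3, grad3, Pi.smul_apply, smul_eq_mul, Finset.mul_sum,
    ← Finset.sum_add_distrib]
  exact Finset.sum_congr rfl fun i _ => pd3_mul i hf (differentiableAt_pi.1 hF i)

lemma div3_cross3 (hF : DifferentiableAt ℝ F x) (hG : DifferentiableAt ℝ G x) :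
    div3 (fun y => cross3 (F y) (G y)) x =
      dot3 (curl3 F x) (G x) - dot3 (F x) (curl3 G x) := by
  have hF' := differentiableAt_pi.1 hF
  have hG' := differentiableAt_pi.1 hG
  simp only [div3, Fin.sum_univ_three, dot3, curl3, cross3, Matrix.cons_val]
  rw [pd3_mul_sub_mul 0 (hF' 1) (hG' 2) (hF' 2) (hG' 1),
    pd3_mul_sub_mul 1 (hF' 2) (hG' 0) (hF' 0) (hG' 2),
    pd3_mul_sub_mul 2 (hF' 0) (hG' 1) (hF' 1) (hG' 0)]
  ring

end VectorCalculus

section Slices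

variable {𝕜 X Y E : Type*} [NontriviallyNormedField 𝕜] [NormedAddCommGroup X] [NormedSpace 𝕜 X]
  [NormedAddCommGroup Y] [NormedSpace 𝕜 Y] [NormedAddCommGroup E] [NormedSpace 𝕜 E]
  {n : WithTop ℕ∞} {f : X → Y → E}

lemma contDiff_slice_left (hf : ContDiff 𝕜 n fun p : X × Y => f p.1 p.2) (y : Y) :
    ContDiff 𝕜 n fun x => f x y :=
  hf.comp (contDiff_prodMk_left y)

lemma contDiff_slice_right (hf : ContDiff 𝕜 n fun p : X × Y => f p.1 p.2) (x : X) :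
    ContDiff 𝕜 n (f x) :=
  hf.comp (contDiff_prodMk_right x)

lemma continuous_deriv_slice_left {f : 𝕜 → Y → E}
    (hf : ContDiff 𝕜 1 fun p : 𝕜 × Y => f p.1 p.2) :
    Continuous fun p : 𝕜 × Y => deriv (fun τ => f τ p.2) p.1 := by
  have hderiv (p : 𝕜 × Y) : deriv (fun τ => f τ p.2) p.1 =
      fderiv 𝕜 (fun q : 𝕜 × Y => f q.1 q.2) p (1, 0) := by
    have hpath : HasDerivAt (fun τ => (τ, p.2)) ((1 : 𝕜), (0 : Y)) p.1 :=
      (hasDerivAt_id p.1).prodMk (hasDerivAt_const p.1 p.2)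
    exact ((hf.differentiable one_ne_zero p).hasFDerivAt.comp_hasDerivAt p.1 hpath).deriv
  simp only [hderiv]
  exact (hf.continuous_fderiv one_ne_zero).clm_apply continuous_const

end Slices

section Products

variable {E : Type*} [NormedAddCommGroup E] [NormedSpace ℝ E] {n : WithTop ℕ∞}
  {F G : E → (Fin 3 → ℝ)}

lemma contDiff_dot3 (hF : ContDiff ℝ n F) (hG : ContDiff ℝ n G) :
    ContDiff ℝ n fun y => dot3 (F y) (G y) :=
  ContDiff.sum fun i _ => (contDiff_pi.1 hF i).mul (contDiff_pi.1 hG i)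

lemma contDiff_cross3 (hF : ContDiff ℝ n F) (hG : ContDiff ℝ n G) :
    ContDiff ℝ n fun y => cross3 (F y) (G y) := by
  have hminor (i j : Fin 3) : ContDiff ℝ n fun y => F y i * G y j - F y j * G y i :=
    ((contDiff_pi.1 hF i).mul (contDiff_pi.1 hG j)).sub
      ((contDiff_pi.1 hF j).mul (contDiff_pi.1 hG i))
  refine contDiff_pi.2 fun i => ?_
  fin_cases i
  exacts [hminor 1 2, hminor 2 0, hminor 0 1]

lemma hasDerivAt_dot3 {a b : ℝ → (Fin 3 → ℝ)} {a' b' : Fin 3 → ℝ} {t : ℝ}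
    (ha : HasDerivAt a a' t) (hb : HasDerivAt b b' t) :
    HasDerivAt (fun τ => dot3 (a τ) (b τ)) (dot3 a' (b t) + dot3 (a t) b') t := by
  simp only [dot3, ← Finset.sum_add_distrib]
  exact HasDerivAt.fun_sum fun i _ => (hasDerivAt_pi.1 ha i).mul (hasDerivAt_pi.1 hb i)

end Products

section Integration

lemma integrable_fderiv_apply {E F : Type*} [NormedAddCommGroup E] [NormedSpace ℝ E]
    [MeasurableSpace E] [OpensMeasurableSpace E] {μ : Measure E} [IsFiniteMeasureOnCompacts μ]
    [NormedAddCommGroup F] [NormedSpace ℝ F] {f : E → F}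
    (hf : ContDiff ℝ 1 f) (hc : HasCompactSupport f) (v : E) :
    Integrable (fun x => fderiv ℝ f x v) μ :=
  have hcont : Continuous fun x => fderiv ℝ f x v :=
    (hf.continuous_fderiv one_ne_zero).clm_apply continuous_const
  hcont.integrable_of_hasCompactSupport (hc.fderiv_apply ℝ v)

lemma integral_fderiv_apply_eq_zero {E F : Type*} [NormedAddCommGroup E] [NormedSpace ℝ E]
    [FiniteDimensional ℝ E] [MeasurableSpace E] [BorelSpace E] {μ : Measure E}
    [μ.IsAddHaarMeasure] [NormedAddCommGroup F] [NormedSpace ℝ F] {f : E → F}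
    (hf : ContDiff ℝ 1 f) (hc : HasCompactSupport f) (v : E) :
    ∫ x, fderiv ℝ f x v ∂μ = 0 := by
  simpa using integral_smul_fderiv_eq_neg_fderiv_smul_of_integrable
    (μ := μ) (f := fun _ => (1 : ℝ)) (g := f) (v := v) (by simp)
    (by simpa using integrable_fderiv_apply hf hc v)
    (by simpa using hf.continuous.integrable_of_hasCompactSupport hc)
    (fun x _ => differentiableAt_const _) (fun x _ => hf.differentiable one_ne_zero x)

lemma integral_div3_eq_zero {F : (Fin 3 → ℝ) → (Fin 3 → ℝ)} (hF : ContDiff ℝ 1 F)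
    (hc : HasCompactSupport F) : ∫ x, div3 F x = 0 := by
  have hFi (i : Fin 3) : ContDiff ℝ 1 fun y => F y i := contDiff_pi.1 hF i
  have hci (i : Fin 3) : HasCompactSupport fun y => F y i :=
    hc.comp_left (g := fun v : Fin 3 → ℝ => v i) rfl
  simp only [div3, pd3]
  rw [integral_finsetSum _ fun i _ => integrable_fderiv_apply (hFi i) (hci i) _]
  exact Finset.sum_eq_zero fun i _ => integral_fderiv_apply_eq_zero (hFi i) (hci i) _

variable {𝕜 E : Type*} [RCLike 𝕜] [NormedAddCommGroup E] [NormedSpace 𝕜 E] [NormedSpace ℝ E]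

lemma hasDerivAt_integral_of_isCompact {X : Type*} [TopologicalSpace X] [T2Space X]
    [MeasurableSpace X] [OpensMeasurableSpace X] {μ : Measure X} [IsFiniteMeasureOnCompacts μ]
    {f f' : 𝕜 → X → E} {K : Set X} (hK : IsCompact K) (hf : ∀ t, Continuous (f t))
    (hf' : Continuous fun p : 𝕜 × X => f' p.1 p.2)
    (hderiv : ∀ t x, HasDerivAt (fun τ => f τ x) (f' t x) t)
    (hsupp : ∀ t, ∀ x ∉ K, f t x = 0) (t : 𝕜) :
    HasDerivAt (fun τ => ∫ x, f τ x ∂μ) (∫ x, f' t x ∂μ) t := by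
  have hsupp' (s : 𝕜) (x : X) (hx : x ∉ K) : f' s x = 0 :=
    (hderiv s x).unique <| by simpa only [hsupp _ x hx] using hasDerivAt_const s (0 : E)
  have hint {h : X → E} (hcont : Continuous h) (h0 : ∀ x ∉ K, h x = 0) : Integrable h μ :=
    hcont.integrable_of_hasCompactSupport (.intro hK h0)
  obtain ⟨C, hC⟩ :=
    ((isCompact_closedBall t 1).prod hK).exists_bound_of_continuousOn hf'.continuousOn
  have hbound (x : X) (s : 𝕜) (hs : s ∈ Metric.closedBall t 1) :
      ‖f' s x‖ ≤ K.indicator (fun _ => C) x := by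
    by_cases hx : x ∈ K
    · simpa only [Set.indicator_of_mem hx] using hC (s, x) ⟨hs, hx⟩
    · simp only [Set.indicator_of_notMem hx, hsupp' s x hx, norm_zero, le_refl]
  have hboundInt : Integrable (K.indicator fun _ => C) μ :=
    (integrable_indicator_iff hK.measurableSet).2 (integrableOn_const hK.measure_lt_top.ne)
  exact (hasDerivAt_integral_of_dominated_loc_of_deriv_le
    (Metric.closedBall_mem_nhds t one_pos)
    (.of_forall fun s => (hint (hf s) (hsupp s)).aestronglyMeasurable)
    (hint (hf t) (hsupp t))
    (hint (hf'.comp (Continuous.prodMk_right t)) (hsupp' t)).aestronglyMeasurable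
    (.of_forall hbound) hboundInt (.of_forall fun x s _ => hderiv s x)).2

lemma hasDerivAt_integral_of_contDiff_of_isCompact {X : Type*} [NormedAddCommGroup X]
    [NormedSpace 𝕜 X] [MeasurableSpace X] [OpensMeasurableSpace X] {μ : Measure X}
    [IsFiniteMeasureOnCompacts μ] {f : 𝕜 → X → E} {K : Set X} (hK : IsCompact K)
    (hf : ContDiff 𝕜 1 fun p : 𝕜 × X => f p.1 p.2)
    (hsupp : ∀ t, ∀ x ∉ K, f t x = 0) (t : 𝕜) :
    HasDerivAt (fun τ => ∫ x, f τ x ∂μ) (∫ x, deriv (fun τ => f τ x) t ∂μ) t :=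
  hasDerivAt_integral_of_isCompact hK
    (fun s => hf.continuous.comp (Continuous.prodMk_right s))
    (continuous_deriv_slice_left hf)
    (fun s x => ((contDiff_slice_left hf x).differentiable one_ne_zero s).hasDerivAt)
    hsupp t

end Integration

/-- The spatial flux of the cross helicity density `V · B`, namely `(u × B) × V - φ B`, for the
velocity `u` that advects `B` and the scalar potential `φ` that drives `V`. The sign is chosen so
that the conservation law reads `∂ₜ(V · B) = div crossHelicityFlux`. -/
def crossHelicityFlux (φ : (Fin 3 → ℝ) → ℝ) (u V B : (Fin 3 → ℝ) → (Fin 3 → ℝ))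
    (x : Fin 3 → ℝ) : Fin 3 → ℝ :=
  cross3 (cross3 (u x) (B x)) (V x) - φ x • B x

namespace crossHelicityFlux

variable {φ : (Fin 3 → ℝ) → ℝ} {u V B : (Fin 3 → ℝ) → (Fin 3 → ℝ)}

lemma contDiff {n : WithTop ℕ∞} (hφ : ContDiff ℝ n φ) (hu : ContDiff ℝ n u)
    (hV : ContDiff ℝ n V) (hB : ContDiff ℝ n B) : ContDiff ℝ n (crossHelicityFlux φ u V B) :=
  (contDiff_cross3 (contDiff_cross3 hu hB) hV).sub (hφ.smul hB)

lemma eq_zero {x : Fin 3 → ℝ} (hx : B x = 0) : crossHelicityFlux φ u V B x = 0 := by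
  simp [crossHelicityFlux, cross3_eq_crossProduct, hx]

lemma div3_eq (hφ : ContDiff ℝ 1 φ) (hu : ContDiff ℝ 1 u) (hV : ContDiff ℝ 1 V)
    (hB : ContDiff ℝ 1 B) {x : Fin 3 → ℝ} (hdiv : div3 B x = 0) :
    div3 (crossHelicityFlux φ u V B) x =
      dot3 (curl3 (fun y => cross3 (u y) (B y)) x) (V x)
        - dot3 (cross3 (u x) (B x)) (curl3 V x) - dot3 (grad3 φ x) (B x) := by
  have hE : ContDiff ℝ 1 fun y => cross3 (u y) (B y) := contDiff_cross3 hu hB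
  have diff {G : Type} [NormedAddCommGroup G] [NormedSpace ℝ G] {h : (Fin 3 → ℝ) → G}
      (hh : ContDiff ℝ 1 h) : DifferentiableAt ℝ h x := hh.differentiable one_ne_zero x
  calc div3 (crossHelicityFlux φ u V B) x
      = div3 (fun y => cross3 (cross3 (u y) (B y)) (V y)) x - div3 (fun y => φ y • B y) x :=
        div3_sub (diff (contDiff_cross3 hE hV)) (diff (hφ.smul hB))
    _ = _ := by
        rw [div3_cross3 (diff hE) (diff hV), div3_smul (diff hφ) (diff hB), hdiv, mul_zero,
          add_zero]

end crossHelicityFlux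

lemma deriv_dot3_eq_div3_crossHelicityFlux {φ : (Fin 3 → ℝ) → ℝ}
    {V B : ℝ → (Fin 3 → ℝ) → (Fin 3 → ℝ)} {u : (Fin 3 → ℝ) → (Fin 3 → ℝ)}
    {J x : Fin 3 → ℝ} {t : ℝ} (hφ : ContDiff ℝ 1 φ) (hu : ContDiff ℝ 1 u)
    (hV : ContDiff ℝ 1 fun p : ℝ × (Fin 3 → ℝ) => V p.1 p.2)
    (hB : ContDiff ℝ 1 fun p : ℝ × (Fin 3 → ℝ) => B p.1 p.2)
    (hmom : deriv (fun τ => V τ x) t =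
      -grad3 φ x - cross3 (curl3 (V t) x) (u x) + cross3 J (B t x))
    (hind : deriv (fun τ => B τ x) t = curl3 (fun y => cross3 (u y) (B t y)) x)
    (hdivB : div3 (B t) x = 0) :
    deriv (fun τ => dot3 (V τ x) (B τ x)) t = div3 (crossHelicityFlux φ u (V t) (B t)) x := by
  have hasDerivAt_time {F : ℝ → (Fin 3 → ℝ) → (Fin 3 → ℝ)}
      (hF : ContDiff ℝ 1 fun p : ℝ × (Fin 3 → ℝ) => F p.1 p.2) :
      HasDerivAt (fun τ => F τ x) (deriv (fun τ => F τ x) t) t :=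
    ((contDiff_slice_left hF x).differentiable one_ne_zero t).hasDerivAt
  calc deriv (fun τ => dot3 (V τ x) (B τ x)) t
      = dot3 (deriv (fun τ => V τ x) t) (B t x) + dot3 (V t x) (deriv (fun τ => B τ x) t) :=
        (hasDerivAt_dot3 (hasDerivAt_time hV) (hasDerivAt_time hB)).deriv
    _ = -dot3 (grad3 φ x) (B t x) - dot3 (cross3 (u x) (B t x)) (curl3 (V t) x)
          + dot3 (curl3 (fun y => cross3 (u y) (B t y)) x) (V t x) := by
        rw [hmom, hind, dot3_mhd_force, dot3_comm (V t x)]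
    _ = div3 (crossHelicityFlux φ u (V t) (B t)) x := by
        rw [crossHelicityFlux.div3_eq hφ hu (contDiff_slice_right hV t)
          (contDiff_slice_right hB t) hdivB]
        ring

theorem cross_helicity_constant_general_hamiltonian_general
    {φ : ℝ → (Fin 3 → ℝ) → ℝ} {u V B J : ℝ → (Fin 3 → ℝ) → (Fin 3 → ℝ)}
    (hφ : ∀ t, ContDiff ℝ 1 (φ t)) (hu : ∀ t, ContDiff ℝ 1 (u t))
    (hV : ContDiff ℝ 1 fun p : ℝ × (Fin 3 → ℝ) => V p.1 p.2)
    (hB : ContDiff ℝ 1 fun p : ℝ × (Fin 3 → ℝ) => B p.1 p.2)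
    {K : Set (Fin 3 → ℝ)} (hK : IsCompact K) (hBsupp : ∀ t, ∀ x ∉ K, B t x = 0)
    (hmom : ∀ t x, deriv (fun τ => V τ x) t =
      -grad3 (φ t) x - cross3 (curl3 (V t) x) (u t x) + cross3 (J t x) (B t x))
    (hind : ∀ t x, deriv (fun τ => B τ x) t = curl3 (fun y => cross3 (u t y) (B t y)) x)
    (hdivB : ∀ t x, div3 (B t) x = 0) (t₁ t₂ : ℝ) :
    ∫ x, dot3 (V t₁ x) (B t₁ x) = ∫ x, dot3 (V t₂ x) (B t₂ x) := by
  have hflux (t : ℝ) : ∫ x, div3 (crossHelicityFlux (φ t) (u t) (V t) (B t)) x = 0 :=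
    integral_div3_eq_zero
      (crossHelicityFlux.contDiff (hφ t) (hu t) (contDiff_slice_right hV t)
        (contDiff_slice_right hB t))
      (.intro hK fun x hx => crossHelicityFlux.eq_zero (hBsupp t x hx))
  have hderiv (t : ℝ) : HasDerivAt (fun τ => ∫ x, dot3 (V τ x) (B τ x)) 0 t := by
    rw [← hflux t]
    simp only [← deriv_dot3_eq_div3_crossHelicityFlux (hφ t) (hu t) hV hB (hmom t _) (hind t _)
      (hdivB t _)]
    exact hasDerivAt_integral_of_contDiff_of_isCompact hK (contDiff_dot3 hV hB)
      (fun s x hx => by rw [hBsupp s x hx, dot3_eq_dotProduct, dotProduct_zero]) t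
  exact is_const_of_deriv_eq_zero (fun t => (hderiv t).differentiableAt)
    (fun t => (hderiv t).deriv) t₁ t₂

/-- For the extended-MHD Hamiltonian flow with arbitrary functional gradients
`ρ† = ∂_ρ H`, `V† = ∂_V H`, `B† = ∂_B H` (any Hamiltonian independent of the mock field),
the cross helicity `∫ V·B` is a constant of motion. -/
theorem cross_helicity_constant_general_hamiltonian
    (ρ ρd : ℝ → (Fin 3 → ℝ) → ℝ)
    (V B Vd Bd : ℝ → (Fin 3 → ℝ) → (Fin 3 → ℝ))
    (hρ : ContDiff ℝ (⊤ : ℕ∞) (fun p : ℝ × (Fin 3 → ℝ) => ρ p.1 p.2))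
    (hρd : ContDiff ℝ (⊤ : ℕ∞) (fun p : ℝ × (Fin 3 → ℝ) => ρd p.1 p.2))
    (hV : ContDiff ℝ (⊤ : ℕ∞) (fun p : ℝ × (Fin 3 → ℝ) => V p.1 p.2))
    (hB : ContDiff ℝ (⊤ : ℕ∞) (fun p : ℝ × (Fin 3 → ℝ) => B p.1 p.2))
    (hVd : ContDiff ℝ (⊤ : ℕ∞) (fun p : ℝ × (Fin 3 → ℝ) => Vd p.1 p.2))
    (hBd : ContDiff ℝ (⊤ : ℕ∞) (fun p : ℝ × (Fin 3 → ℝ) => Bd p.1 p.2))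
    (hρpos : ∀ t x, 0 < ρ t x)
    (K : Set (Fin 3 → ℝ)) (hK : IsCompact K)
    (hVsupp : ∀ t x, x ∉ K → V t x = 0)
    (hBsupp : ∀ t x, x ∉ K → B t x = 0)
    (hVdsupp : ∀ t x, x ∉ K → Vd t x = 0)
    (hBdsupp : ∀ t x, x ∉ K → Bd t x = 0)
    (hmom : ∀ t x, deriv (fun τ => V τ x) t =
      -grad3 (ρd t) x - (ρ t x)⁻¹ • cross3 (curl3 (V t) x) (Vd t x)
        + (ρ t x)⁻¹ • cross3 (curl3 (Bd t) x) (B t x))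
    (hind : ∀ t x, deriv (fun τ => B τ x) t =
      curl3 (fun y => cross3 ((ρ t y)⁻¹ • Vd t y) (B t y)) x)
    (hdivB : ∀ t x, div3 (B t) x = 0) :
    ∀ t₁ t₂ : ℝ,
      (∫ x : Fin 3 → ℝ, dot3 (V t₁ x) (B t₁ x)) =
        ∫ x : Fin 3 → ℝ, dot3 (V t₂ x) (B t₂ x) := by
  have hρinv (t : ℝ) : ContDiff ℝ (⊤ : ℕ∞) fun x => (ρ t x)⁻¹ :=
    (contDiff_slice_right hρ t).inv fun x => (hρpos t x).ne'
  exact cross_helicity_constant_general_hamiltonian_general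
    (u := fun t x => (ρ t x)⁻¹ • Vd t x) (J := fun t x => (ρ t x)⁻¹ • curl3 (Bd t) x)
    (fun t => (contDiff_slice_right hρd t).of_le (by simp))
    (fun t => ((hρinv t).smul (contDiff_slice_right hVd t)).of_le (by simp))
    (hV.of_le (by simp)) (hB.of_le (by simp)) hK hBsupp
    (by simpa only [smul_cross3, cross3_smul] using hmom) hind hdivB
end

section
/- Let V : ℝ × ℝ³ → ℝ³ be smooth and let x : ℝ × ℝ → ℝ³ be a smooth map satisfying ∂ₜx(t,s) = V(t, x(t,s)) and x(t, s+1) = x(t,s) for all (t,s) (an advected closed loop). Let A : ℝ × ℝ³ → ℝ³ be smooth and define the circulation Φ(t) = ∫₀¹ A(t, x(t,s)) · ∂ₛx(t,s) ds. Then Φ is differentiable and Φ′(t) = ∫₀¹ (∂ₜA − V×(∇×A))(t, x(t,s)) · ∂ₛx(t,s) ds. -/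
open MeasureTheory

/-!
Along the map `Γ(t, s) = (t, γ(t, s))` put `P = A(Γ) · ∂ₛγ` and `Q = A(Γ) · ∂ₜγ`. The terms with
`∂ₜ∂ₛγ` cancel in `∂ₜP - ∂ₛQ`, which leaves the antisymmetrised derivative of `A` evaluated on `∂ₜΓ`
and `∂ₛΓ`. With `∂ₜγ = V` this equals `(∂ₜA - V × (∇ × A)) · ∂ₛγ`, since the antisymmetric part of
the spatial derivative of `A` is the curl. Differentiating `∫ P` under the integral sign then gives
the formula up to the boundary term `∫ ∂ₛQ`, which vanishes because `Q = A(Γ) · V(Γ)` takes the same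
value at both ends of a closed loop.
-/

section PartialDerivatives

variable {𝕜 E F G : Type*} [NontriviallyNormedField 𝕜]
  [NormedAddCommGroup E] [NormedSpace 𝕜 E] [NormedAddCommGroup F] [NormedSpace 𝕜 F]
  [NormedAddCommGroup G] [NormedSpace 𝕜 G]

theorem hasDerivAt_comp_prodMk_left {f : 𝕜 × E → F} {t : 𝕜} {x : E}
    (hf : DifferentiableAt 𝕜 f (t, x)) :
    HasDerivAt (fun τ => f (τ, x)) (fderiv 𝕜 f (t, x) (1, 0)) t :=
  hf.hasFDerivAt.comp_hasDerivAt t ((hasDerivAt_id t).prodMk (hasDerivAt_const t x))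

theorem hasFDerivAt_comp_prodMk_right {f : E × F → G} {x : E} {y : F}
    (hf : DifferentiableAt 𝕜 f (x, y)) :
    HasFDerivAt (fun z => f (x, z)) (fderiv 𝕜 f (x, y) ∘L .inr 𝕜 E F) y :=
  hf.hasFDerivAt.comp y (hasFDerivAt_prodMk_right x y)

theorem hasDerivAt_comp_prodMk_right {f : E × 𝕜 → F} {x : E} {s : 𝕜}
    (hf : DifferentiableAt 𝕜 f (x, s)) :
    HasDerivAt (fun σ => f (x, σ)) (fderiv 𝕜 f (x, s) (0, 1)) s :=
  (hasFDerivAt_comp_prodMk_right hf).hasDerivAt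

theorem fderiv_uncurry_apply_one {f : 𝕜 → E → F} {t : 𝕜} {x : E}
    (hf : DifferentiableAt 𝕜 (fun p : 𝕜 × E => f p.1 p.2) (t, x)) (v : E) :
    fderiv 𝕜 (fun p : 𝕜 × E => f p.1 p.2) (t, x) (1, v) =
      deriv (fun τ => f τ x) t + fderiv 𝕜 (f t) x v := by
  rw [(hasDerivAt_comp_prodMk_left hf).deriv, (hasFDerivAt_comp_prodMk_right hf).fderiv,
    ContinuousLinearMap.comp_apply, ContinuousLinearMap.inr_apply, ← map_add]
  simp

theorem fderiv_uncurry_apply_zero {f : E → F → G} {x : E} {y : F}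
    (hf : DifferentiableAt 𝕜 (fun p : E × F => f p.1 p.2) (x, y)) (w : F) :
    fderiv 𝕜 (fun p : E × F => f p.1 p.2) (x, y) (0, w) = fderiv 𝕜 (f x) y w := by
  rw [(hasFDerivAt_comp_prodMk_right hf).fderiv]
  rfl

end PartialDerivatives

section OneForms

variable {X E F : Type*} [NormedAddCommGroup X] [NormedSpace ℝ X]
  [NormedAddCommGroup E] [NormedSpace ℝ E] [NormedAddCommGroup F] [NormedSpace ℝ F]

theorem fderiv_clm_apply_fderiv_sub_swap {ψ : X → E →L[ℝ] F} {g : X → E} {p : X}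
    (hψ : DifferentiableAt ℝ ψ p) (hg : ContDiffAt ℝ 2 g p) (u v : X) :
    fderiv ℝ (fun q => ψ q (fderiv ℝ g q v)) p u - fderiv ℝ (fun q => ψ q (fderiv ℝ g q u)) p v =
      fderiv ℝ ψ p u (fderiv ℝ g p v) - fderiv ℝ ψ p v (fderiv ℝ g p u) := by
  have hg' : DifferentiableAt ℝ (fderiv ℝ g) p :=
    (hg.fderiv_right (m := 1) le_rfl).differentiableAt one_ne_zero
  have product_rule (w z : X) : fderiv ℝ (fun q => ψ q (fderiv ℝ g q w)) p z =
      ψ p (fderiv ℝ (fderiv ℝ g) p z w) + fderiv ℝ ψ p z (fderiv ℝ g p w) := by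
    rw [fderiv_clm_apply hψ (hg'.clm_apply (differentiableAt_const w)),
      fderiv_clm_apply hg' (differentiableAt_const w)]
    simp
  have symm : fderiv ℝ (fderiv ℝ g) p u v = fderiv ℝ (fderiv ℝ g) p v u :=
    hg.isSymmSndFDerivAt (by simp) u v
  rw [product_rule, product_rule, symm, add_sub_add_left_eq_sub]

theorem hasDerivAt_intervalIntegral_of_contDiff {P : ℝ × ℝ → F} (hP : ContDiff ℝ 1 P)
    (a b t : ℝ) :
    HasDerivAt (fun τ => ∫ s in a..b, P (τ, s)) (∫ s in a..b, fderiv ℝ P (t, s) (1, 0)) t := by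
  have hP' : Continuous fun p => fderiv ℝ P p (1, 0) :=
    (hP.continuous_fderiv one_ne_zero).clm_apply continuous_const
  obtain ⟨C, hC⟩ := ((isCompact_Icc (a := t - 1) (b := t + 1)).prod
    (isCompact_uIcc (a := a) (b := b))).exists_bound_of_continuousOn hP'.continuousOn
  exact (intervalIntegral.hasDerivAt_integral_of_dominated_loc_of_deriv_le
    (F := fun τ s => P (τ, s)) (F' := fun τ s => fderiv ℝ P (τ, s) (1, 0)) (bound := fun _ => C)
    (Icc_mem_nhds (sub_one_lt t) (lt_add_one t))
    (.of_forall fun τ => (hP.continuous.comp (.prodMk_right τ)).aestronglyMeasurable)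
    ((hP.continuous.comp (.prodMk_right t)).intervalIntegrable a b)
    (hP'.comp (.prodMk_right t)).aestronglyMeasurable
    (.of_forall fun s hs τ hτ => hC (τ, s) ⟨hτ, Set.uIoc_subset_uIcc hs⟩)
    intervalIntegrable_const
    (.of_forall fun s _ τ _ =>
      hasDerivAt_comp_prodMk_left (hP.differentiable one_ne_zero (τ, s)))).2

variable [CompleteSpace F]

theorem hasDerivAt_intervalIntegral_add_boundary {P Q : ℝ × ℝ → F}
    (hP : ContDiff ℝ 1 P) (hQ : ContDiff ℝ 1 Q) (a b t : ℝ) :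
    HasDerivAt (fun τ => ∫ s in a..b, P (τ, s))
      ((∫ s in a..b, (fderiv ℝ P (t, s) (1, 0) - fderiv ℝ Q (t, s) (0, 1))) +
        (Q (t, b) - Q (t, a))) t := by
  have integrable_fderiv {R : ℝ × ℝ → F} (hR : ContDiff ℝ 1 R) (v : ℝ × ℝ) :
      IntervalIntegrable (fun s => fderiv ℝ R (t, s) v) volume a b :=
    (((hR.continuous_fderiv one_ne_zero).comp (.prodMk_right t)).clm_apply
      continuous_const).intervalIntegrable a b
  have hQ_ftc : ∫ s in a..b, fderiv ℝ Q (t, s) (0, 1) = Q (t, b) - Q (t, a) :=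
    intervalIntegral.integral_eq_sub_of_hasDerivAt
      (fun s _ => hasDerivAt_comp_prodMk_right (hQ.differentiable one_ne_zero (t, s)))
      (integrable_fderiv hQ _)
  rw [intervalIntegral.integral_sub (integrable_fderiv hP _) (integrable_fderiv hQ _), hQ_ftc,
    sub_add_cancel]
  exact hasDerivAt_intervalIntegral_of_contDiff hP a b t

theorem hasDerivAt_integral_oneForm_along_curve {α : ℝ × E → E →L[ℝ] F} {g : ℝ × ℝ → E}
    (hα : ContDiff ℝ 1 α) (hg : ContDiff ℝ 2 g) (a b t : ℝ) :
    HasDerivAt (fun τ => ∫ s in a..b, α (τ, g (τ, s)) (fderiv ℝ g (τ, s) (0, 1)))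
      ((∫ s in a..b,
          (fderiv ℝ α (t, g (t, s)) (1, fderiv ℝ g (t, s) (1, 0)) (fderiv ℝ g (t, s) (0, 1)) -
            fderiv ℝ α (t, g (t, s)) (0, fderiv ℝ g (t, s) (0, 1)) (fderiv ℝ g (t, s) (1, 0)))) +
        (α (t, g (t, b)) (fderiv ℝ g (t, b) (1, 0)) -
          α (t, g (t, a)) (fderiv ℝ g (t, a) (1, 0)))) t := by
  have hg₁ : ContDiff ℝ 1 g := hg.of_le one_le_two
  have hψ : ContDiff ℝ 1 fun p : ℝ × ℝ => α (p.1, g p) := hα.comp (contDiff_fst.prodMk hg₁)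
  have contDiff_pairing (u : ℝ × ℝ) : ContDiff ℝ 1 fun p => α (p.1, g p) (fderiv ℝ g p u) :=
    hψ.clm_apply ((hg.fderiv_right le_rfl).clm_apply contDiff_const)
  have chain_rule (p u : ℝ × ℝ) : fderiv ℝ (fun q : ℝ × ℝ => α (q.1, g q)) p u =
      fderiv ℝ α (p.1, g p) (u.1, fderiv ℝ g p u) :=
    congrArg (· u) ((hα.differentiable one_ne_zero (p.1, g p)).hasFDerivAt.comp p
      (hasFDerivAt_fst.prodMk (hg₁.differentiable one_ne_zero p).hasFDerivAt)).fderiv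
  convert hasDerivAt_intervalIntegral_add_boundary
    (contDiff_pairing (0, 1)) (contDiff_pairing (1, 0)) a b t using 4 with s
  rw [fderiv_clm_apply_fderiv_sub_swap (hψ.differentiable one_ne_zero _) hg.contDiffAt,
    chain_rule, chain_rule]

end OneForms

section Curl

/-- The pairing `dot3` as a continuous bilinear map: `a ↦ dot3L a` turns a vector field on `ℝ³` into
the 1-form whose line integral is the circulation of the field. -/
noncomputable def dot3L : (Fin 3 → ℝ) →L[ℝ] (Fin 3 → ℝ) →L[ℝ] ℝ :=
  (dotProductBilin ℝ ℝ).toContinuousBilinearMap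

theorem dot3L_apply (a b : Fin 3 → ℝ) : dot3L a b = dot3 a b := rfl

theorem pd3_eq_fderiv_apply {F : (Fin 3 → ℝ) → Fin 3 → ℝ} {x : Fin 3 → ℝ}
    (hF : DifferentiableAt ℝ F x) (i j : Fin 3) :
    pd3 j (fun y => F y i) x = fderiv ℝ F x (Pi.single j 1) i := by
  rw [pd3, fderiv_apply hF]
  rfl

theorem dot3_fderiv_sub_swap {F : (Fin 3 → ℝ) → Fin 3 → ℝ} {x : Fin 3 → ℝ}
    (hF : DifferentiableAt ℝ F x) (v w : Fin 3 → ℝ) :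
    dot3 (fderiv ℝ F x v) w - dot3 (fderiv ℝ F x w) v = -dot3 (cross3 v (curl3 F x)) w := by
  have expand (u : Fin 3 → ℝ) (i : Fin 3) :
      fderiv ℝ F x u i = ∑ j, u j * pd3 j (fun y => F y i) x := by
    conv_lhs => rw [← (Pi.basisFun ℝ (Fin 3)).sum_repr u]
    simp [pd3_eq_fderiv_apply hF]
  simp only [dot3, expand, Fin.sum_univ_three, cross3, curl3, Matrix.cons_val]
  ring

theorem dot3_fderiv_uncurry_sub_swap {A : ℝ → (Fin 3 → ℝ) → Fin 3 → ℝ} {t : ℝ} {x : Fin 3 → ℝ}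
    (hA : DifferentiableAt ℝ (fun p : ℝ × (Fin 3 → ℝ) => A p.1 p.2) (t, x)) (v w : Fin 3 → ℝ) :
    dot3 (fderiv ℝ (fun p : ℝ × (Fin 3 → ℝ) => A p.1 p.2) (t, x) (1, v)) w -
        dot3 (fderiv ℝ (fun p : ℝ × (Fin 3 → ℝ) => A p.1 p.2) (t, x) (0, w)) v =
      dot3 (deriv (fun τ => A τ x) t - cross3 v (curl3 (A t) x)) w := by
  have hAt : DifferentiableAt ℝ (A t) x := (hasFDerivAt_comp_prodMk_right hA).differentiableAt
  have antisymm := dot3_fderiv_sub_swap hAt v w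
  rw [fderiv_uncurry_apply_one hA, fderiv_uncurry_apply_zero hA]
  simp only [← dot3L_apply, map_add, map_sub, add_apply, sub_apply] at antisymm ⊢
  linear_combination antisymm

end Curl

theorem circulation_transport_formula_general
    (V : ℝ → (Fin 3 → ℝ) → (Fin 3 → ℝ))
    (γ : ℝ → ℝ → (Fin 3 → ℝ))
    (A : ℝ → (Fin 3 → ℝ) → (Fin 3 → ℝ))
    (hγ : ContDiff ℝ 2 (fun p : ℝ × ℝ => γ p.1 p.2))
    (hA : ContDiff ℝ 1 (fun p : ℝ × (Fin 3 → ℝ) => A p.1 p.2))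
    (hadv : ∀ t s, deriv (fun τ => γ τ s) t = V t (γ t s))
    (hclosed : ∀ t, γ t 1 = γ t 0) (t : ℝ) :
    HasDerivAt (fun τ => ∫ s in (0:ℝ)..1, dot3 (A τ (γ τ s)) (deriv (fun σ => γ τ σ) s))
      (∫ s in (0:ℝ)..1,
        dot3 (deriv (fun τ => A τ (γ t s)) t - cross3 (V t (γ t s)) (curl3 (A t) (γ t s)))
          (deriv (fun σ => γ t σ) s)) t := by
  have hγd := hγ.differentiable two_ne_zero
  have hAd := hA.differentiable one_ne_zero
  have deriv_loop (τ s : ℝ) :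
      deriv (fun σ => γ τ σ) s = fderiv ℝ (fun p : ℝ × ℝ => γ p.1 p.2) (τ, s) (0, 1) :=
    (hasDerivAt_comp_prodMk_right (hγd (τ, s))).deriv
  have velocity (s : ℝ) : fderiv ℝ (fun p : ℝ × ℝ => γ p.1 p.2) (t, s) (1, 0) = V t (γ t s) := by
    rw [← hadv, (hasDerivAt_comp_prodMk_left (hγd (t, s))).deriv]
  have fderiv_oneForm (p u : ℝ × (Fin 3 → ℝ)) :
      fderiv ℝ (fun q : ℝ × (Fin 3 → ℝ) => dot3L (A q.1 q.2)) p u =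
        dot3L (fderiv ℝ (fun q : ℝ × (Fin 3 → ℝ) => A q.1 q.2) p u) :=
    congrArg (· u) (dot3L.hasFDerivAt.comp p (hAd p).hasFDerivAt).fderiv
  have transport := hasDerivAt_integral_oneForm_along_curve (dot3L.contDiff.comp hA) hγ 0 1 t
  simpa only [Function.comp_def, fderiv_oneForm, velocity, hclosed, sub_self, add_zero, dot3L_apply,
    dot3_fderiv_uncurry_sub_swap (hAd _), deriv_loop] using transport

/-- Transport formula for the circulation of a vector field `A` along a
co-moving closed loop `γ` advected by the flow `V`:
`Φ′(t) = ∫₀¹ (∂ₜA − V×(∇×A))(t, γ(t,s)) · ∂ₛγ(t,s) ds`. -/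
theorem circulation_transport_formula
    (V : ℝ → (Fin 3 → ℝ) → (Fin 3 → ℝ))
    (γ : ℝ → ℝ → (Fin 3 → ℝ))
    (A : ℝ → (Fin 3 → ℝ) → (Fin 3 → ℝ))
    (hV : ContDiff ℝ (⊤ : ℕ∞) (fun p : ℝ × (Fin 3 → ℝ) => V p.1 p.2))
    (hγ : ContDiff ℝ (⊤ : ℕ∞) (fun p : ℝ × ℝ => γ p.1 p.2))
    (hA : ContDiff ℝ (⊤ : ℕ∞) (fun p : ℝ × (Fin 3 → ℝ) => A p.1 p.2))
    (hadv : ∀ t s, deriv (fun τ => γ τ s) t = V t (γ t s))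
    (hper : ∀ t s, γ t (s + 1) = γ t s) :
    ∀ t : ℝ,
      HasDerivAt (fun τ => ∫ s in (0:ℝ)..1,
          dot3 (A τ (γ τ s)) (deriv (fun σ => γ τ σ) s))
        (∫ s in (0:ℝ)..1,
          dot3 (deriv (fun τ => A τ (γ t s)) t
              - cross3 (V t (γ t s)) (curl3 (A t) (γ t s)))
            (deriv (fun σ => γ t σ) s)) t :=
  circulation_transport_formula_general V γ A (contDiff_infty.1 hγ 2) (contDiff_infty.1 hA 1) hadv
    fun t => by simpa using hper t 0
end

section
/- Let V : ℝ × ℝ³ → ℝ³ be smooth and let x : ℝ × ℝ → ℝ³ be a smooth map satisfying ∂ₜx(t,s) = V(t, x(t,s)) and x(t, s+1) = x(t,s) for all (t,s) (an advected closed loop). Let A : ℝ × ℝ³ → ℝ³ and φ : ℝ × ℝ³ → ℝ be smooth with ∂ₜA = V×(∇×A) − ∇φ for all (t,x). Then the circulation Φ(t) = ∫₀¹ A(t, x(t,s)) · ∂ₛx(t,s) ds is constant in t. -/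
open MeasureTheory

/-!
In space-time `ℝ × ℝ³` consider the 1-form `ω = A · dx - φ dt`. The induction equation says exactly
that `dω ((1, V), (0, v)) = 0` for every spatial vector `v` (ideal Ohm's law: the electric field in
the co-moving frame vanishes). The world sheet `(t, s) ↦ (t, γ t s)` of an advected loop has tangent
vectors `(1, V)` and `(0, ∂ₛγ)`, so the pullback of `ω` to the `(t, s)`-plane is closed, hence equal
to `df` for some `f`. The circulation at time `t` is then `f (t, 1) - f (t, 0)`, whose time
derivative vanishes because the loop is closed.
-/

open Function

section PartialDerivatives

variable {𝕜 : Type*} [NontriviallyNormedField 𝕜]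
  {E F : Type*} [NormedAddCommGroup E] [NormedSpace 𝕜 E] [NormedAddCommGroup F] [NormedSpace 𝕜 F]

theorem hasDerivAt_slice_left {f : 𝕜 × E → F} {f' : 𝕜 × E →L[𝕜] F} {t : 𝕜} {x : E}
    (hf : HasFDerivAt f f' (t, x)) : HasDerivAt (fun τ => f (τ, x)) (f' (1, 0)) t :=
  hf.comp_hasDerivAt t ((hasDerivAt_id t).prodMk (hasDerivAt_const t x))

theorem fderiv_uncurry_apply {f : 𝕜 → E → F} {t : 𝕜} {x : E}
    (hf : DifferentiableAt 𝕜 (uncurry f) (t, x)) (c : 𝕜) (v : E) :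
    fderiv 𝕜 (uncurry f) (t, x) (c, v) = c • deriv (fun τ => f τ x) t + fderiv 𝕜 (f t) x v := by
  have htime : HasDerivAt (fun τ => f τ x) (fderiv 𝕜 (uncurry f) (t, x) (1, 0)) t :=
    hasDerivAt_slice_left hf.hasFDerivAt
  have hspace : HasFDerivAt (f t)
      ((fderiv 𝕜 (uncurry f) (t, x)).comp (ContinuousLinearMap.inr 𝕜 𝕜 E)) x :=
    hf.hasFDerivAt.comp x (hasFDerivAt_prodMk_right t x)
  rw [htime.deriv, hspace.fderiv, ContinuousLinearMap.comp_apply, ContinuousLinearMap.inr_apply,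
    ← map_smul, ← map_add]
  simp

end PartialDerivatives

section Pullback

variable {𝕜 : Type*} [NontriviallyNormedField 𝕜]
  {H M E : Type*} [NormedAddCommGroup H] [NormedSpace 𝕜 H] [NormedAddCommGroup M]
  [NormedSpace 𝕜 M] [NormedAddCommGroup E] [NormedSpace 𝕜 E]

/-- The pullback `g^*ω` of a 1-form `ω`. As in Mathlib's Poincaré lemma, 1-forms are families of
continuous linear maps, and `dω (u, v)` is `fderiv 𝕜 ω x u v - fderiv 𝕜 ω x v u`. -/
noncomputable def oneFormPullback (g : H → M) (ω : M → M →L[𝕜] E) (p : H) : H →L[𝕜] E :=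
  (ω (g p)).comp (fderiv 𝕜 g p)

theorem hasFDerivAt_fderiv_of_contDiffAt_two {g : H → M} {p : H} (hg : ContDiffAt 𝕜 2 g p) :
    HasFDerivAt (fderiv 𝕜 g) (fderiv 𝕜 (fderiv 𝕜 g) p) p :=
  ((hg.fderiv_right (m := 1) (by norm_num)).differentiableAt one_ne_zero).hasFDerivAt

theorem differentiableAt_oneFormPullback {g : H → M} {ω : M → M →L[𝕜] E} {p : H}
    (hω : DifferentiableAt 𝕜 ω (g p)) (hg : ContDiffAt 𝕜 2 g p) :
    DifferentiableAt 𝕜 (oneFormPullback g ω) p :=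
  (hω.comp p (hg.differentiableAt two_ne_zero)).clm_comp
    (hasFDerivAt_fderiv_of_contDiffAt_two hg).differentiableAt

theorem fderiv_oneFormPullback_apply {g : H → M} {ω : M → M →L[𝕜] E} {p : H}
    (hω : DifferentiableAt 𝕜 ω (g p)) (hg : ContDiffAt 𝕜 2 g p) (u v : H) :
    fderiv 𝕜 (oneFormPullback g ω) p u v =
      fderiv 𝕜 ω (g p) (fderiv 𝕜 g p u) (fderiv 𝕜 g p v) +
        ω (g p) (fderiv 𝕜 (fderiv 𝕜 g) p u v) := by
  have hωg : HasFDerivAt (fun q => ω (g q)) ((fderiv 𝕜 ω (g p)).comp (fderiv 𝕜 g p)) p :=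
    hω.hasFDerivAt.comp p (hg.differentiableAt two_ne_zero).hasFDerivAt
  have hpull : HasFDerivAt (oneFormPullback g ω) _ p :=
    hωg.clm_comp (hasFDerivAt_fderiv_of_contDiffAt_two hg)
  rw [hpull.fderiv]
  simp [add_comm]

theorem fderiv_oneFormPullback_comm [IsRCLikeNormedField 𝕜]
    {g : H → M} {ω : M → M →L[𝕜] E} {p u v : H}
    (hω : DifferentiableAt 𝕜 ω (g p)) (hg : ContDiffAt 𝕜 2 g p)
    (hcomm : fderiv 𝕜 ω (g p) (fderiv 𝕜 g p u) (fderiv 𝕜 g p v) =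
      fderiv 𝕜 ω (g p) (fderiv 𝕜 g p v) (fderiv 𝕜 g p u)) :
    fderiv 𝕜 (oneFormPullback g ω) p u v = fderiv 𝕜 (oneFormPullback g ω) p v u := by
  have hsymm : IsSymmSndFDerivAt 𝕜 g p := hg.isSymmSndFDerivAt (by simp)
  rw [fderiv_oneFormPullback_apply hω hg, fderiv_oneFormPullback_apply hω hg, hcomm, hsymm u v]

theorem apply_comm_of_apply_comm_basis_prod {B : 𝕜 × 𝕜 →L[𝕜] 𝕜 × 𝕜 →L[𝕜] E}
    (hB : B (1, 0) (0, 1) = B (0, 1) (1, 0)) (u v : 𝕜 × 𝕜) : B u v = B v u := by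
  have hbasis (w : 𝕜 × 𝕜) : w = w.1 • (1, 0) + w.2 • (0, 1) := by simp
  rw [hbasis u, hbasis v]
  simp only [map_add, map_smul, add_apply, smul_apply, hB]
  module

end Pullback

section ClosedForms

variable {M E : Type*} [NormedAddCommGroup M] [NormedSpace ℝ M] [NormedAddCommGroup E]
  [NormedSpace ℝ E] [CompleteSpace E]

theorem exists_hasFDerivAt_of_closed_plane {η : ℝ × ℝ → ℝ × ℝ →L[ℝ] E}
    (hη : Differentiable ℝ η)
    (hclosed : ∀ p, fderiv ℝ η p (1, 0) (0, 1) = fderiv ℝ η p (0, 1) (1, 0)) :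
    ∃ f : ℝ × ℝ → E, ∀ p, HasFDerivAt f (η p) p := by
  simpa using convex_univ.exists_forall_hasFDerivAt_of_fderiv_symmetric isOpen_univ
    hη.differentiableOn fun p _ => apply_comm_of_apply_comm_basis_prod (hclosed p)

theorem integral_closed_form_vertical_eq {η : ℝ × ℝ → ℝ × ℝ →L[ℝ] E} {a b : ℝ}
    (hη : Differentiable ℝ η)
    (hclosed : ∀ p, fderiv ℝ η p (1, 0) (0, 1) = fderiv ℝ η p (0, 1) (1, 0))
    (hends : ∀ t, η (t, a) (1, 0) = η (t, b) (1, 0)) (t₁ t₂ : ℝ) :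
    ∫ s in a..b, η (t₁, s) (0, 1) = ∫ s in a..b, η (t₂, s) (0, 1) := by
  obtain ⟨f, hf⟩ := exists_hasFDerivAt_of_closed_plane hη hclosed
  have hf_vert (t s : ℝ) : HasDerivAt (fun σ => f (t, σ)) (η (t, s) (0, 1)) s :=
    (hf (t, s)).comp_hasDerivAt s ((hasDerivAt_const s t).prodMk (hasDerivAt_id s))
  have hf_horiz (t s : ℝ) : HasDerivAt (fun τ => f (τ, s)) (η (t, s) (1, 0)) t :=
    hasDerivAt_slice_left (hf (t, s))
  have hintegral (t : ℝ) : ∫ s in a..b, η (t, s) (0, 1) = f (t, b) - f (t, a) := by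
    have hcont : Continuous fun s => η (t, s) (0, 1) := by
      have := hη.continuous
      fun_prop
    exact intervalIntegral.integral_eq_sub_of_hasDerivAt (fun s _ => hf_vert t s)
      (hcont.intervalIntegrable a b)
  have hderiv (t : ℝ) : HasDerivAt (fun τ => f (τ, b) - f (τ, a)) 0 t := by
    simpa only [hends, sub_self] using (hf_horiz t b).fun_sub (hf_horiz t a)
  rw [hintegral, hintegral]
  exact is_const_of_deriv_eq_zero (fun t => (hderiv t).differentiableAt)
    (fun t => (hderiv t).deriv) t₁ t₂

theorem integral_oneForm_loop_eq {g : ℝ × ℝ → M} {ω : M → M →L[ℝ] E} {a b : ℝ}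
    (hω : Differentiable ℝ ω) (hg : ContDiff ℝ 2 g)
    (hdω : ∀ p, fderiv ℝ ω (g p) (fderiv ℝ g p (1, 0)) (fderiv ℝ g p (0, 1)) =
      fderiv ℝ ω (g p) (fderiv ℝ g p (0, 1)) (fderiv ℝ g p (1, 0)))
    (hloop : ∀ t, g (t, a) = g (t, b)) (t₁ t₂ : ℝ) :
    ∫ s in a..b, ω (g (t₁, s)) (fderiv ℝ g (t₁, s) (0, 1)) =
      ∫ s in a..b, ω (g (t₂, s)) (fderiv ℝ g (t₂, s) (0, 1)) := by
  have hg_horiz (t s : ℝ) : HasDerivAt (fun τ => g (τ, s)) (fderiv ℝ g (t, s) (1, 0)) t :=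
    hasDerivAt_slice_left (hg.differentiable two_ne_zero (t, s)).hasFDerivAt
  have hends (t : ℝ) : fderiv ℝ g (t, a) (1, 0) = fderiv ℝ g (t, b) (1, 0) := by
    rw [← (hg_horiz t a).deriv, ← (hg_horiz t b).deriv, funext hloop]
  exact integral_closed_form_vertical_eq (η := oneFormPullback g ω)
    (fun p => differentiableAt_oneFormPullback (hω _) hg.contDiffAt)
    (fun p => fderiv_oneFormPullback_comm (hω _) hg.contDiffAt (hdω p))
    (fun t => by simp only [oneFormPullback, ContinuousLinearMap.comp_apply, hloop, hends]) t₁ t₂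

end ClosedForms

section SpaceTime

variable {E : Type*} [NormedAddCommGroup E] [NormedSpace ℝ E]

/-- The world sheet in space-time `ℝ × E` swept out by the moving curve `γ t`, with time as the
first parameter. -/
def worldSheet (γ : ℝ → ℝ → E) (p : ℝ × ℝ) : ℝ × E := (p.1, γ p.1 p.2)

theorem contDiff_worldSheet {γ : ℝ → ℝ → E} {n : WithTop ℕ∞} (hγ : ContDiff ℝ n (uncurry γ)) :
    ContDiff ℝ n (worldSheet γ) :=
  contDiff_fst.prodMk hγ

theorem fderiv_worldSheet_apply {γ : ℝ → ℝ → E} {t s : ℝ}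
    (hγ : DifferentiableAt ℝ (uncurry γ) (t, s)) (c d : ℝ) :
    fderiv ℝ (worldSheet γ) (t, s) (c, d) =
      (c, c • deriv (fun τ => γ τ s) t + d • deriv (γ t) s) := by
  have hsheet : HasFDerivAt (worldSheet γ) _ (t, s) := hasFDerivAt_fst.prodMk hγ.hasFDerivAt
  rw [hsheet.fderiv, ContinuousLinearMap.prod_apply, fderiv_uncurry_apply hγ,
    fderiv_eq_smul_deriv, ContinuousLinearMap.coe_fst']

end SpaceTime

section VectorCalculus

theorem add_dot3 (a b c : Fin 3 → ℝ) : dot3 (a + b) c = dot3 a c + dot3 b c :=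
  add_dotProduct a b c

theorem sub_dot3 (a b c : Fin 3 → ℝ) : dot3 (a - b) c = dot3 a c - dot3 b c :=
  sub_dotProduct a b c

theorem dot3_grad3 (f : (Fin 3 → ℝ) → ℝ) (x v : Fin 3 → ℝ) :
    dot3 (grad3 f x) v = fderiv ℝ f x v := by
  conv_rhs => rw [pi_eq_sum_univ' v]
  simp [dot3, grad3, pd3, mul_comm]

theorem dot3_cross3_curl3 {F : (Fin 3 → ℝ) → Fin 3 → ℝ} {x : Fin 3 → ℝ}
    (hF : DifferentiableAt ℝ F x) (u v : Fin 3 → ℝ) :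
    dot3 (cross3 u (curl3 F x)) v = dot3 (fderiv ℝ F x v) u - dot3 (fderiv ℝ F x u) v := by
  have hcomponent (w : Fin 3 → ℝ) (j : Fin 3) :
      fderiv ℝ F x w j = dot3 (grad3 (fun y => F y j) x) w := by
    rw [dot3_grad3, fderiv_apply hF, ContinuousLinearMap.comp_apply, ContinuousLinearMap.proj_apply]
  simp only [dot3, hcomponent, grad3, cross3, curl3, Fin.sum_univ_three, Matrix.cons_val]
  ring

end VectorCalculus

section PotentialForm

variable {A : ℝ → (Fin 3 → ℝ) → Fin 3 → ℝ} {φ : ℝ → (Fin 3 → ℝ) → ℝ}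

/-- The electromagnetic potential 1-form `A · dx - φ dt` on space-time `ℝ × ℝ³`; with this sign of
the `dt` term its exterior derivative encodes `E = -∂ₜA - ∇φ` and `B = ∇ × A`. -/
noncomputable def potentialForm (A : ℝ → (Fin 3 → ℝ) → Fin 3 → ℝ) (φ : ℝ → (Fin 3 → ℝ) → ℝ)
    (p : ℝ × (Fin 3 → ℝ)) : ℝ × (Fin 3 → ℝ) →L[ℝ] ℝ :=
  ∑ i, uncurry A p i • (ContinuousLinearMap.proj i).comp (ContinuousLinearMap.snd ℝ ℝ _) -
    uncurry φ p • ContinuousLinearMap.fst ℝ ℝ _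

theorem potentialForm_apply (p w : ℝ × (Fin 3 → ℝ)) :
    potentialForm A φ p w = dot3 (uncurry A p) w.2 - uncurry φ p * w.1 := by
  simp [potentialForm, dot3]

theorem differentiableAt_potentialForm {p : ℝ × (Fin 3 → ℝ)}
    (hA : DifferentiableAt ℝ (uncurry A) p) (hφ : DifferentiableAt ℝ (uncurry φ) p) :
    DifferentiableAt ℝ (potentialForm A φ) p := by
  unfold potentialForm
  fun_prop

theorem fderiv_potentialForm_apply {p : ℝ × (Fin 3 → ℝ)}
    (hA : DifferentiableAt ℝ (uncurry A) p) (hφ : DifferentiableAt ℝ (uncurry φ) p)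
    (u w : ℝ × (Fin 3 → ℝ)) :
    fderiv ℝ (potentialForm A φ) p u w =
      dot3 (fderiv ℝ (uncurry A) p u) w.2 - fderiv ℝ (uncurry φ) p u * w.1 := by
  have hform : HasFDerivAt (potentialForm A φ) _ p :=
    (HasFDerivAt.fun_sum fun i _ => (hasFDerivAt_pi'.1 hA.hasFDerivAt i).smul_const
      ((ContinuousLinearMap.proj i).comp (ContinuousLinearMap.snd ℝ ℝ (Fin 3 → ℝ)))).fun_sub
        (hφ.hasFDerivAt.smul_const (ContinuousLinearMap.fst ℝ ℝ (Fin 3 → ℝ)))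
  rw [hform.fderiv]
  simp [dot3]

theorem fderiv_potentialForm_comm_of_induction {t : ℝ} {x u : Fin 3 → ℝ}
    (hA : DifferentiableAt ℝ (uncurry A) (t, x)) (hφ : DifferentiableAt ℝ (uncurry φ) (t, x))
    (hind : deriv (fun τ => A τ x) t = cross3 u (curl3 (A t) x) - grad3 (φ t) x)
    (v : Fin 3 → ℝ) :
    fderiv ℝ (potentialForm A φ) (t, x) (1, u) (0, v) =
      fderiv ℝ (potentialForm A φ) (t, x) (0, v) (1, u) := by
  have hAt : DifferentiableAt ℝ (A t) x := hA.comp x (hasFDerivAt_prodMk_right t x).differentiableAt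
  simp only [fderiv_potentialForm_apply hA hφ, fderiv_uncurry_apply hA, fderiv_uncurry_apply hφ,
    hind, zero_smul, one_smul, zero_add, mul_zero, mul_one, sub_zero]
  rw [add_dot3, sub_dot3, dot3_cross3_curl3 hAt, dot3_grad3]
  ring

end PotentialForm

theorem circulation_constant_general
    {V : ℝ → (Fin 3 → ℝ) → (Fin 3 → ℝ)} {γ : ℝ → ℝ → (Fin 3 → ℝ)}
    {A : ℝ → (Fin 3 → ℝ) → (Fin 3 → ℝ)} {φ : ℝ → (Fin 3 → ℝ) → ℝ} {a b : ℝ}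
    (hγ : ContDiff ℝ 2 (uncurry γ)) (hA : Differentiable ℝ (uncurry A))
    (hφ : Differentiable ℝ (uncurry φ))
    (hadv : ∀ t s, deriv (fun τ => γ τ s) t = V t (γ t s))
    (hloop : ∀ t, γ t a = γ t b)
    (hind : ∀ t x, deriv (fun τ => A τ x) t =
      cross3 (V t x) (curl3 (A t) x) - grad3 (φ t) x) (t₁ t₂ : ℝ) :
    ∫ s in a..b, dot3 (A t₁ (γ t₁ s)) (deriv (γ t₁) s) =
      ∫ s in a..b, dot3 (A t₂ (γ t₂ s)) (deriv (γ t₂) s) := by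
  have htangent_time (t s : ℝ) :
      fderiv ℝ (worldSheet γ) (t, s) (1, 0) = (1, V t (γ t s)) := by
    simp [fderiv_worldSheet_apply (hγ.differentiable two_ne_zero _), hadv]
  have htangent_loop (t s : ℝ) :
      fderiv ℝ (worldSheet γ) (t, s) (0, 1) = (0, deriv (γ t) s) := by
    simp [fderiv_worldSheet_apply (hγ.differentiable two_ne_zero _)]
  have hOhm (p : ℝ × ℝ) : fderiv ℝ (potentialForm A φ) (worldSheet γ p)
        (fderiv ℝ (worldSheet γ) p (1, 0)) (fderiv ℝ (worldSheet γ) p (0, 1)) =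
      fderiv ℝ (potentialForm A φ) (worldSheet γ p)
        (fderiv ℝ (worldSheet γ) p (0, 1)) (fderiv ℝ (worldSheet γ) p (1, 0)) := by
    rw [htangent_time, htangent_loop]
    exact fderiv_potentialForm_comm_of_induction (hA _) (hφ _) (hind _ _) _
  have hintegrand (t s : ℝ) : potentialForm A φ (worldSheet γ (t, s))
      (fderiv ℝ (worldSheet γ) (t, s) (0, 1)) = dot3 (A t (γ t s)) (deriv (γ t) s) := by
    simp [htangent_loop, potentialForm_apply, worldSheet]
  simpa only [hintegrand] using integral_oneForm_loop_eq
    (fun p => differentiableAt_potentialForm (hA p) (hφ p)) (contDiff_worldSheet hγ) hOhm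
    (fun t => congrArg (Prod.mk t) (hloop t)) t₁ t₂

/-- Alfvén's (Kelvin's) circulation law: if `∂ₜA = V×(∇×A) − ∇φ`, then the
circulation `Φ(t) = ∫₀¹ A(t, γ(t,s)) · ∂ₛγ(t,s) ds` along every co-moving closed loop is
constant in time. -/
theorem circulation_constant
    (V : ℝ → (Fin 3 → ℝ) → (Fin 3 → ℝ))
    (γ : ℝ → ℝ → (Fin 3 → ℝ))
    (A : ℝ → (Fin 3 → ℝ) → (Fin 3 → ℝ))
    (φ : ℝ → (Fin 3 → ℝ) → ℝ)
    (hV : ContDiff ℝ (⊤ : ℕ∞) (fun p : ℝ × (Fin 3 → ℝ) => V p.1 p.2))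
    (hγ : ContDiff ℝ (⊤ : ℕ∞) (fun p : ℝ × ℝ => γ p.1 p.2))
    (hA : ContDiff ℝ (⊤ : ℕ∞) (fun p : ℝ × (Fin 3 → ℝ) => A p.1 p.2))
    (hφ : ContDiff ℝ (⊤ : ℕ∞) (fun p : ℝ × (Fin 3 → ℝ) => φ p.1 p.2))
    (hadv : ∀ t s, deriv (fun τ => γ τ s) t = V t (γ t s))
    (hper : ∀ t s, γ t (s + 1) = γ t s)
    (hind : ∀ t x, deriv (fun τ => A τ x) t =
      cross3 (V t x) (curl3 (A t) x) - grad3 (φ t) x) :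
    ∀ t₁ t₂ : ℝ,
      (∫ s in (0:ℝ)..1, dot3 (A t₁ (γ t₁ s)) (deriv (fun σ => γ t₁ σ) s)) =
        ∫ s in (0:ℝ)..1, dot3 (A t₂ (γ t₂ s)) (deriv (fun σ => γ t₂ σ) s) :=
  circulation_constant_general (contDiff_infty.1 hγ 2) (hA.differentiable (by simp))
    (hφ.differentiable (by simp)) hadv (fun t => by simpa using (hper t 0).symm) hind
end

section
/- Let ψ, ψ̌ : ℝ × ℝ² → ℝ and V : ℝ × ℝ² → ℝ² be smooth, with ∇·V = 0 everywhere, ∂ₜψ + V·∇ψ = 0 and ∂ₜψ̌ + V·∇ψ̌ = 0 for all (t,x), and suppose there is a compact set K ⊆ ℝ² such that ψ(t,·) and ψ̌(t,·) vanish outside K for every t. Let h : ℝ → ℝ be continuously differentiable with h(0) = 0. Then t ↦ ∫_{ℝ²} h(ψ(t,x) ψ̌(t,x)) dx is constant in t. -/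
open MeasureTheory

/-- `i`-th partial derivative of a scalar field on ℝ². -/
noncomputable def pd2 (i : Fin 2) (f : (Fin 2 → ℝ) → ℝ) (x : Fin 2 → ℝ) : ℝ :=
  fderiv ℝ f x (Pi.single i 1)

/-- Gradient of a scalar field on ℝ². -/
noncomputable def grad2 (f : (Fin 2 → ℝ) → ℝ) (x : Fin 2 → ℝ) : Fin 2 → ℝ :=
  fun i => pd2 i f x

/-- Divergence of a vector field on ℝ². -/
noncomputable def div2 (F : (Fin 2 → ℝ) → (Fin 2 → ℝ)) (x : Fin 2 → ℝ) : ℝ :=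
  ∑ i, pd2 i (fun y => F y i) x

/-- The two-dimensional Jacobian (canonical) bracket {a,b} = ∂_y a ∂ₓ b − ∂ₓ a ∂_y b. -/
noncomputable def jbr (a b : (Fin 2 → ℝ) → ℝ) (x : Fin 2 → ℝ) : ℝ :=
  pd2 1 a x * pd2 0 b x - pd2 0 a x * pd2 1 b x

/-- Laplacian of a scalar field on ℝ². -/
noncomputable def lap2 (f : (Fin 2 → ℝ) → ℝ) (x : Fin 2 → ℝ) : ℝ :=
  pd2 0 (pd2 0 f) x + pd2 1 (pd2 1 f) x

/-!
Since `V` is divergence free, `(V · ∇) ρ = ∇ · (ρ V)` integrates to zero for every compactly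
supported `ρ`; so if `∂ₜ ρ + (V · ∇) ρ = 0`, then differentiating under the integral sign shows that
`∫ ρ` is conserved. By the chain rule a function of advected fields is again advected, which applies
to `ρ = h (ψ ψ̌)`; the condition `h 0 = 0` keeps its support compact.
-/

open Function Set

section ParametricIntegral

variable {𝕜 X G : Type*} [RCLike 𝕜] [TopologicalSpace X] [T2Space X] [MeasurableSpace X]
  [OpensMeasurableSpace X] {μ : Measure X} [IsFiniteMeasureOnCompacts μ]
  [NormedAddCommGroup G] [NormedSpace ℝ G] [NormedSpace 𝕜 G]

theorem hasDerivAt_integral_of_continuous_of_eq_zero_off_compact {f f' : 𝕜 → X → G} {K : Set X}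
    (hf : ∀ t, Continuous (f t)) (hf' : Continuous (uncurry f'))
    (hderiv : ∀ t x, HasDerivAt (f · x) (f' t x) t)
    (hK : IsCompact K) (hfK : ∀ t, ∀ x ∉ K, f t x = 0) (t : 𝕜) :
    HasDerivAt (fun s => ∫ x, f s x ∂μ) (∫ x, f' t x ∂μ) t := by
  have hf'K : ∀ s, ∀ x ∉ K, f' s x = 0 := fun s x hx => by
    have hzero : (f · x) = fun _ => 0 := funext fun r => hfK r x hx
    exact (hzero ▸ hderiv s x).unique (hasDerivAt_const s 0)
  have hint : ∀ s, Integrable (f s) μ := fun s =>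
    (hf s).integrable_of_hasCompactSupport (.intro hK (hfK s))
  have hint' : Integrable (f' t) μ :=
    (hf'.comp (.prodMk_right t)).integrable_of_hasCompactSupport (.intro hK (hf'K t))
  obtain ⟨M, hM⟩ := ((isCompact_closedBall t 1).prod hK).exists_bound_of_continuousOn
    hf'.continuousOn
  have hbound : ∀ x, ∀ s ∈ Metric.closedBall t 1, ‖f' s x‖ ≤ K.indicator (fun _ => M) x := by
    intro x s hs
    by_cases hx : x ∈ K
    · rw [indicator_of_mem hx]
      exact hM (s, x) ⟨hs, hx⟩
    · simp [hx, hf'K s x hx]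
  have hM_int : Integrable (K.indicator fun _ => M) μ :=
    (integrable_indicator_iff hK.measurableSet).2 (integrableOn_const hK.measure_lt_top.ne)
  exact (hasDerivAt_integral_of_dominated_loc_of_deriv_le
    (Metric.closedBall_mem_nhds t one_pos) (.of_forall fun s => (hint s).aestronglyMeasurable)
    (hint t) hint'.aestronglyMeasurable (.of_forall hbound) hM_int
    (.of_forall fun x s _ => hderiv s x)).2

end ParametricIntegral

section Divergence

variable {E : Type*} [NormedAddCommGroup E] [NormedSpace ℝ E]

/-- The divergence of a vector field on a normed space, as the trace of its derivative; this needs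
no choice of coordinates. -/
noncomputable def divergence (W : E → E) (x : E) : ℝ :=
  LinearMap.trace ℝ E (fderiv ℝ W x)

variable [FiniteDimensional ℝ E]

theorem divergence_smul {g : E → ℝ} {W : E → E} {x : E} (hg : DifferentiableAt ℝ g x)
    (hW : DifferentiableAt ℝ W x) :
    divergence (fun y => g y • W y) x = g x * divergence W x + fderiv ℝ g x (W x) := by
  have htrace : LinearMap.trace ℝ E ((fderiv ℝ g x).smulRight (W x)) = fderiv ℝ g x (W x) :=
    LinearMap.trace_smulRight (fderiv ℝ g x : E →ₗ[ℝ] ℝ) (W x)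
  rw [divergence, fderiv_fun_smul hg hW, ContinuousLinearMap.toLinearMap_add, map_add, htrace,
    ContinuousLinearMap.toLinearMap_smul, map_smul, smul_eq_mul, divergence]

variable [MeasurableSpace E] [BorelSpace E] (μ : Measure E) [μ.IsAddHaarMeasure]
  {F : Type*} [NormedAddCommGroup F] [NormedSpace ℝ F]

theorem integral_fderiv_eq_zero_of_hasCompactSupport {g : E → F} (hg : ContDiff ℝ 1 g)
    (hsupp : HasCompactSupport g) : ∫ x, fderiv ℝ g x ∂μ = 0 := by
  have hg' : Integrable (fderiv ℝ g) μ :=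
    (hg.continuous_fderiv one_ne_zero).integrable_of_hasCompactSupport (hsupp.fderiv ℝ)
  ext v
  have hparts := integral_smul_fderiv_eq_neg_fderiv_smul_of_integrable (μ := μ)
    (f := fun _ => (1 : ℝ)) (g := g) (v := v) (by simp)
    (by simpa using hg'.apply_continuousLinearMap v)
    (by simpa using hg.continuous.integrable_of_hasCompactSupport hsupp)
    (by simp) (fun x _ => hg.differentiable one_ne_zero x)
  simpa [ContinuousLinearMap.integral_apply hg'] using hparts

theorem integral_divergence_eq_zero_of_hasCompactSupport {W : E → E} (hW : ContDiff ℝ 1 W)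
    (hsupp : HasCompactSupport W) : ∫ x, divergence W x ∂μ = 0 := by
  have hW' : Integrable (fderiv ℝ W) μ :=
    (hW.continuous_fderiv one_ne_zero).integrable_of_hasCompactSupport (hsupp.fderiv ℝ)
  let traceCLM : (E →L[ℝ] E) →L[ℝ] ℝ :=
    (LinearMap.trace ℝ E ∘ₗ ContinuousLinearMap.coeLM ℝ).toContinuousLinearMap
  calc ∫ x, divergence W x ∂μ = traceCLM (∫ x, fderiv ℝ W x ∂μ) :=
        traceCLM.integral_comp_comm hW'
    _ = 0 := by rw [integral_fderiv_eq_zero_of_hasCompactSupport μ hW hsupp, map_zero]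

theorem integral_fderiv_apply_eq_zero_of_divergence_eq_zero {g : E → ℝ} {W : E → E}
    (hg : ContDiff ℝ 1 g) (hsupp : HasCompactSupport g) (hW : ContDiff ℝ 1 W)
    (hdiv : ∀ x, divergence W x = 0) : ∫ x, fderiv ℝ g x (W x) ∂μ = 0 := by
  have hflux : ∀ x, fderiv ℝ g x (W x) = divergence (fun y => g y • W y) x := fun x => by
    rw [divergence_smul (hg.differentiable one_ne_zero x) (hW.differentiable one_ne_zero x),
      hdiv x, mul_zero, zero_add]
  simp only [hflux]
  exact integral_divergence_eq_zero_of_hasCompactSupport μ (hg.smul hW) hsupp.smul_right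

end Divergence

section Advection

variable {E F F' : Type*} [NormedAddCommGroup E] [NormedSpace ℝ E]
  [NormedAddCommGroup F] [NormedSpace ℝ F] [NormedAddCommGroup F'] [NormedSpace ℝ F']

/-- The field `q` is advected (Lie-dragged) by the flow of the time-dependent velocity field `V`:
`∂ₜ q + (V · ∇) q = 0`. The values of `q` lie in a normed space, so that a family of advected
fields is itself an advected field. For a non-differentiable `q` the derivatives take junk
values. -/
def IsAdvectedBy (V : ℝ → E → E) (q : ℝ → E → F) : Prop :=
  ∀ t x, deriv (fun s => q s x) t + fderiv ℝ (q t) x (V t x) = 0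

namespace IsAdvectedBy

variable {V : ℝ → E → E} {q : ℝ → E → F} {r : ℝ → E → F'}

theorem comp (hadv : IsAdvectedBy V q) {h : F → F'} (hh : Differentiable ℝ h)
    (hq : Differentiable ℝ (uncurry q)) : IsAdvectedBy V (fun t x => h (q t x)) := by
  intro t x
  have htime : DifferentiableAt ℝ (fun s => q s x) t := by fun_prop
  have hspace : DifferentiableAt ℝ (q t) x := by fun_prop
  have hchain_time : deriv (fun s => h (q s x)) t = fderiv ℝ h (q t x) (deriv (q · x) t) :=
    fderiv_comp_deriv t (hh _) htime
  have hchain_space : fderiv ℝ (fun y => h (q t y)) x = fderiv ℝ h (q t x) ∘L fderiv ℝ (q t) x :=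
    fderiv_comp x (hh _) hspace
  rw [hchain_time, hchain_space, ContinuousLinearMap.comp_apply, ← map_add, hadv t x, map_zero]

theorem prodMk (hq_adv : IsAdvectedBy V q) (hr_adv : IsAdvectedBy V r)
    (hq : Differentiable ℝ (uncurry q)) (hr : Differentiable ℝ (uncurry r)) :
    IsAdvectedBy V (fun t x => (q t x, r t x)) := by
  intro t x
  have htime : HasDerivAt (fun s => (q s x, r s x)) (deriv (q · x) t, deriv (r · x) t) t :=
    .prodMk (DifferentiableAt.hasDerivAt (by fun_prop)) (DifferentiableAt.hasDerivAt (by fun_prop))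
  have hspace : fderiv ℝ (fun y => (q t y, r t y)) x = (fderiv ℝ (q t) x).prod (fderiv ℝ (r t) x) :=
    DifferentiableAt.fderiv_prodMk (by fun_prop) (by fun_prop)
  rw [htime.deriv, hspace]
  exact Prod.ext (hq_adv t x) (hr_adv t x)

variable [FiniteDimensional ℝ E] [MeasurableSpace E] [BorelSpace E] (μ : Measure E)
  [μ.IsAddHaarMeasure] {ρ : ℝ → E → ℝ} {K : Set E}

theorem integral_eq (hadv : IsAdvectedBy V ρ) (hρ : ContDiff ℝ 1 (uncurry ρ))
    (hV : ∀ t, ContDiff ℝ 1 (V t)) (hdiv : ∀ t x, divergence (V t) x = 0)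
    (hK : IsCompact K) (hρK : ∀ t, ∀ x ∉ K, ρ t x = 0) (t₁ t₂ : ℝ) :
    ∫ x, ρ t₁ x ∂μ = ∫ x, ρ t₂ x ∂μ := by
  have hspace : ∀ t, ContDiff ℝ 1 (ρ t) := fun t => hρ.comp (contDiff_prodMk_right t)
  have htime : ∀ t x, HasDerivAt (ρ · x) (fderiv ℝ (uncurry ρ) (t, x) (1, 0)) t := fun t x =>
    (hρ.differentiable one_ne_zero (t, x)).hasFDerivAt.comp_hasDerivAt (f := (·, x)) t
      ((hasDerivAt_id t).prodMk (hasDerivAt_const t x))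
  have htime_cont : Continuous fun p => fderiv ℝ (uncurry ρ) p (1, 0) :=
    (hρ.continuous_fderiv one_ne_zero).clm_apply continuous_const
  have hadvection : ∀ t x, fderiv ℝ (uncurry ρ) (t, x) (1, 0) = -fderiv ℝ (ρ t) x (V t x) :=
    fun t x => (htime t x).deriv ▸ eq_neg_of_add_eq_zero_left (hadv t x)
  have hderiv : ∀ t, HasDerivAt (fun s => ∫ x, ρ s x ∂μ) 0 t := fun t => by
    have hleibniz := hasDerivAt_integral_of_continuous_of_eq_zero_off_compact (μ := μ)
      (f' := fun t x => fderiv ℝ (uncurry ρ) (t, x) (1, 0)) (fun s => (hspace s).continuous)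
      htime_cont htime hK hρK t
    simpa only [hadvection, integral_neg, neg_zero,
      integral_fderiv_apply_eq_zero_of_divergence_eq_zero μ (hspace t) (.intro hK (hρK t)) (hV t)
        (hdiv t)] using hleibniz
  exact is_const_of_deriv_eq_zero (fun t => (hderiv t).differentiableAt)
    (fun t => (hderiv t).deriv) t₁ t₂

end IsAdvectedBy

theorem mock_scalar_casimir_constant_general [FiniteDimensional ℝ E] [MeasurableSpace E]
    [BorelSpace E] (μ : Measure E) [μ.IsAddHaarMeasure] {V : ℝ → E → E} {q : ℝ → E → F}
    {K : Set E} {h : F → ℝ} (hq : ContDiff ℝ 1 (uncurry q)) (hV : ∀ t, ContDiff ℝ 1 (V t))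
    (hdiv : ∀ t x, divergence (V t) x = 0) (hadv : IsAdvectedBy V q)
    (hK : IsCompact K) (hqK : ∀ t, ∀ x ∉ K, q t x = 0) (hh : ContDiff ℝ 1 h) (hh0 : h 0 = 0)
    (t₁ t₂ : ℝ) : ∫ x, h (q t₁ x) ∂μ = ∫ x, h (q t₂ x) ∂μ :=
  (hadv.comp (hh.differentiable one_ne_zero) (hq.differentiable one_ne_zero)).integral_eq μ
    (hh.comp hq) hV hdiv hK (fun t x hx => by rw [hqK t x hx, hh0]) t₁ t₂

end Advection

section Plane

theorem sum_mul_pd2_eq_fderiv (f : (Fin 2 → ℝ) → ℝ) (x v : Fin 2 → ℝ) :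
    ∑ i, v i * pd2 i f x = fderiv ℝ f x v := by
  conv_rhs => rw [pi_eq_sum_univ' v]
  simp [pd2]

theorem div2_eq_divergence {W : (Fin 2 → ℝ) → (Fin 2 → ℝ)} {x : Fin 2 → ℝ}
    (hW : DifferentiableAt ℝ W x) : div2 W x = divergence W x := by
  rw [divergence, LinearMap.trace_eq_matrix_trace ℝ (Pi.basisFun ℝ (Fin 2))]
  simp [div2, pd2, Matrix.trace, fderiv_apply hW]

theorem isAdvectedBy_iff_pd2 {V : ℝ → (Fin 2 → ℝ) → (Fin 2 → ℝ)} {f : ℝ → (Fin 2 → ℝ) → ℝ} :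
    IsAdvectedBy V f ↔
      ∀ t x, deriv (fun τ => f τ x) t + ∑ i, V t x i * pd2 i (f t) x = 0 := by
  simp only [IsAdvectedBy, sum_mul_pd2_eq_fderiv]

end Plane

/-- For two scalar fields `ψ` and `ψ̌` advected by the same incompressible
flow `V` on ℝ², the Casimir `∫ h(ψψ̌)` is a constant of motion for every C¹ function `h`
with `h 0 = 0`. -/
theorem mock_scalar_casimir_constant
    (ψ ψm : ℝ → (Fin 2 → ℝ) → ℝ)
    (V : ℝ → (Fin 2 → ℝ) → (Fin 2 → ℝ))
    (hψ : ContDiff ℝ (⊤ : ℕ∞) (fun p : ℝ × (Fin 2 → ℝ) => ψ p.1 p.2))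
    (hψm : ContDiff ℝ (⊤ : ℕ∞) (fun p : ℝ × (Fin 2 → ℝ) => ψm p.1 p.2))
    (hV : ContDiff ℝ (⊤ : ℕ∞) (fun p : ℝ × (Fin 2 → ℝ) => V p.1 p.2))
    (hdiv : ∀ t x, div2 (V t) x = 0)
    (hadv : ∀ t x, deriv (fun τ => ψ τ x) t + ∑ i, V t x i * pd2 i (ψ t) x = 0)
    (hadvm : ∀ t x, deriv (fun τ => ψm τ x) t + ∑ i, V t x i * pd2 i (ψm t) x = 0)
    (K : Set (Fin 2 → ℝ)) (hK : IsCompact K)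
    (hψsupp : ∀ t x, x ∉ K → ψ t x = 0)
    (hψmsupp : ∀ t x, x ∉ K → ψm t x = 0)
    (h : ℝ → ℝ) (hh : ContDiff ℝ 1 h) (hh0 : h 0 = 0) :
    ∀ t₁ t₂ : ℝ,
      (∫ x : Fin 2 → ℝ, h (ψ t₁ x * ψm t₁ x)) =
        ∫ x : Fin 2 → ℝ, h (ψ t₂ x * ψm t₂ x) := by
  have hψ₁ : ContDiff ℝ 1 (uncurry ψ) := hψ.of_le (mod_cast le_top)
  have hψm₁ : ContDiff ℝ 1 (uncurry ψm) := hψm.of_le (mod_cast le_top)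
  have hV₁ : ∀ t, ContDiff ℝ 1 (V t) := fun t =>
    (hV.of_le (mod_cast le_top)).comp (contDiff_prodMk_right t)
  have hpair : IsAdvectedBy V (fun t x => (ψ t x, ψm t x)) :=
    (isAdvectedBy_iff_pd2.2 hadv).prodMk (isAdvectedBy_iff_pd2.2 hadvm)
      (hψ₁.differentiable one_ne_zero) (hψm₁.differentiable one_ne_zero)
  exact mock_scalar_casimir_constant_general volume (h := fun p : ℝ × ℝ => h (p.1 * p.2))
    (hψ₁.prodMk hψm₁) hV₁
    (fun t x => div2_eq_divergence (hV₁ t |>.differentiable one_ne_zero x) ▸ hdiv t x) hpair hK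
    (fun t x hx => Prod.ext (hψsupp t x hx) (hψmsupp t x hx))
    (hh.comp (contDiff_fst.mul contDiff_snd)) (by simpa using hh0)
end

section
/- Let B_y, B_z, θ : ℝ → ℝ be smooth, and let k_y, k_z ∈ ℝ. Define the ℂ³-valued fields on ℝ³: Ǎ(x,y,z) = i θ(x) e^{i(k_y y + k_z z)} (0, k_y, k_z) and B*(x,y,z) = (0, B_y(x), B_z(x)). Then the (componentwise complexified) identity B* × (∇×Ǎ) = i θ′(x) (k_y B_y(x) + k_z B_z(x)) e^{i(k_y y + k_z z)} (1, 0, 0) holds at every point; consequently B* × (∇×Ǎ) vanishes identically on ℝ³ if and only if θ′(x) (k_y B_y(x) + k_z B_z(x)) = 0 for every x ∈ ℝ. -/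
open Complex

/-- `i`-th spatial partial derivative of a ℂ-valued field on ℝ³. -/
noncomputable def pdC (i : Fin 3) (f : (Fin 3 → ℝ) → ℂ) (x : Fin 3 → ℝ) : ℂ :=
  fderiv ℝ f x (Pi.single i 1)

/-- Componentwise curl of a ℂ³-valued field on ℝ³. -/
noncomputable def curlC (F : (Fin 3 → ℝ) → (Fin 3 → ℂ)) (x : Fin 3 → ℝ) : Fin 3 → ℂ :=
  ![pdC 1 (fun y => F y 2) x - pdC 2 (fun y => F y 1) x,
    pdC 2 (fun y => F y 0) x - pdC 0 (fun y => F y 2) x,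
    pdC 0 (fun y => F y 1) x - pdC 1 (fun y => F y 0) x]

/-- Cross product extended bilinearly to ℂ³. -/
def crossC (a b : Fin 3 → ℂ) : Fin 3 → ℂ :=
  ![a 1 * b 2 - a 2 * b 1, a 2 * b 0 - a 0 * b 2, a 0 * b 1 - a 1 * b 0]

/-!
The potential has the form `f • k` with `k` constant, so its curl is `∇f × k`. In
`∇f = (i θ' e₀ + i (iθ) k) e^{i k·x}` the part produced by the plane wave is parallel to `k`, hence
drops out. Since `B*` is orthogonal to `e₀`, Lagrange's formula then turns `B* × (e₀ × k)` into
`(B* · k) e₀`.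
-/

open scoped Matrix

/-- The componentwise gradient of a `ℂ`-valued field on `ℝ³`. -/
noncomputable def gradC (f : (Fin 3 → ℝ) → ℂ) (x : Fin 3 → ℝ) : Fin 3 → ℂ :=
  fun i => pdC i f x

theorem crossC_eq_crossProduct (a b : Fin 3 → ℂ) : crossC a b = a ⨯₃ b :=
  (cross_apply a b).symm

theorem gradC_mul {f g : (Fin 3 → ℝ) → ℂ} {x : Fin 3 → ℝ}
    (hf : DifferentiableAt ℝ f x) (hg : DifferentiableAt ℝ g x) :
    gradC (fun y => f y * g y) x = f x • gradC g x + g x • gradC f x := by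
  ext i
  simp [gradC, pdC, fderiv_fun_mul hf hg]

theorem gradC_comp_apply {g : ℝ → ℂ} {x : Fin 3 → ℝ} {j : Fin 3}
    (hg : DifferentiableAt ℝ g (x j)) :
    gradC (fun y => g (y j)) x = Pi.single j (deriv g (x j)) := by
  have h : HasFDerivAt (fun y : Fin 3 → ℝ => g (y j)) _ x :=
    hg.hasDerivAt.hasFDerivAt.comp x (hasFDerivAt_apply j x)
  ext i
  simp [gradC, pdC, h.fderiv, Pi.single_apply, eq_comm]

theorem curlC_smul_const {f : (Fin 3 → ℝ) → ℂ} {x : Fin 3 → ℝ}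
    (hf : DifferentiableAt ℝ f x) (c : Fin 3 → ℂ) :
    curlC (fun y => f y • c) x = gradC f x ⨯₃ c := by
  have pdC_mul_const (i : Fin 3) (a : ℂ) : pdC i (fun y => f y * a) x = gradC f x i * a := by
    simp [gradC, pdC, fderiv_mul_const hf, mul_comm a]
  simp only [curlC, cross_apply, Pi.smul_apply, smul_eq_mul, pdC_mul_const]

/-- The plane wave `e^{i k·x}` on `ℝ³`; the wave vector `k` may be complex. -/
noncomputable def planeWave (k : Fin 3 → ℂ) (x : Fin 3 → ℝ) : ℂ :=
  exp (I * ∑ i, k i * (x i : ℂ))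

theorem hasFDerivAt_planeWave (k : Fin 3 → ℂ) (x : Fin 3 → ℝ) :
    HasFDerivAt (planeWave k)
      (planeWave k x • I • ∑ i, k i • ofRealCLM.comp (ContinuousLinearMap.proj i)) x := by
  have coord (i : Fin 3) : HasFDerivAt (fun y : Fin 3 → ℝ => (y i : ℂ))
      (ofRealCLM.comp (ContinuousLinearMap.proj i)) x :=
    ofRealCLM.hasFDerivAt.comp x (hasFDerivAt_apply i x)
  exact ((HasFDerivAt.fun_sum fun i _ => (coord i).const_mul (k i)).const_mul I).cexp

theorem gradC_planeWave (k : Fin 3 → ℂ) (x : Fin 3 → ℝ) :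
    gradC (planeWave k) x = (planeWave k x * I) • k := by
  ext i
  simp [gradC, pdC, (hasFDerivAt_planeWave k x).fderiv, Pi.single_apply, apply_ite ofReal,
    mul_assoc]

theorem curlC_mul_planeWave_smul {g : (Fin 3 → ℝ) → ℂ} {x : Fin 3 → ℝ}
    (hg : DifferentiableAt ℝ g x) (k : Fin 3 → ℂ) :
    curlC (fun y => (g y * planeWave k y) • k) x = planeWave k x • (gradC g x ⨯₃ k) := by
  have hk : DifferentiableAt ℝ (planeWave k) x := (hasFDerivAt_planeWave k x).differentiableAt
  rw [curlC_smul_const (hg.fun_mul hk), gradC_mul hg hk, gradC_planeWave]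
  simp only [map_add, map_smul, LinearMap.add_apply, LinearMap.smul_apply, cross_self,
    smul_zero, zero_add]

theorem cross_single_cross {R : Type*} [CommRing R] {b : Fin 3 → R} {j : Fin 3} (hb : b j = 0)
    (a : R) (k : Fin 3 → R) :
    b ⨯₃ (Pi.single j a ⨯₃ k) = (b ⬝ᵥ k) • Pi.single j a := by
  rw [cross_cross_eq_smul_sub_smul', single_dotProduct, hb, mul_zero, zero_smul, sub_zero]

theorem crossC_curlC_mul_planeWave_smul {g : ℝ → ℂ} {x : Fin 3 → ℝ} {j : Fin 3}
    (hg : DifferentiableAt ℝ g (x j)) (k : Fin 3 → ℂ) {b : Fin 3 → ℂ} (hb : b j = 0) :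
    crossC b (curlC (fun y => (g (y j) * planeWave k y) • k) x) =
      (planeWave k x * (b ⬝ᵥ k)) • Pi.single j (deriv g (x j)) := by
  have hgj : DifferentiableAt ℝ (fun y : Fin 3 → ℝ => g (y j)) x :=
    hg.comp x (differentiableAt_apply j x)
  rw [crossC_eq_crossProduct, curlC_mul_planeWave_smul hgj, gradC_comp_apply hg, map_smul,
    cross_single_cross hb, smul_smul]

theorem deriv_ofReal_comp {f : ℝ → ℝ} {s : ℝ} (hf : DifferentiableAt ℝ f s) :
    deriv (fun t => (f t : ℂ)) s = ((deriv f s : ℝ) : ℂ) :=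
  hf.hasDerivAt.ofReal_comp.deriv

theorem slab_singular_casimir_determining_eq_general
    (By Bz θ : ℝ → ℂ) (hθ : Differentiable ℝ θ) (ky kz : ℂ)
    (Ac : (Fin 3 → ℝ) → (Fin 3 → ℂ))
    (hAc : Ac = fun x => (I * θ (x 0) * exp (I * (ky * (x 1 : ℂ) + kz * (x 2 : ℂ)))) •
      ![(0 : ℂ), ky, kz])
    (Bs : (Fin 3 → ℝ) → (Fin 3 → ℂ))
    (hBs : Bs = fun x => ![(0 : ℂ), By (x 0), Bz (x 0)]) :
    (∀ x : Fin 3 → ℝ,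
      crossC (Bs x) (curlC Ac x) =
        (I * deriv θ (x 0) * (ky * By (x 0) + kz * Bz (x 0)) *
          exp (I * (ky * (x 1 : ℂ) + kz * (x 2 : ℂ)))) • ![(1 : ℂ), 0, 0]) ∧
    ((∀ x : Fin 3 → ℝ, crossC (Bs x) (curlC Ac x) = 0) ↔
      ∀ s : ℝ, deriv θ s * (ky * By s + kz * Bz s) = 0) := by
  have wave (x : Fin 3 → ℝ) :
      exp (I * (ky * (x 1 : ℂ) + kz * (x 2 : ℂ))) = planeWave ![0, ky, kz] x := by
    simp [planeWave, Fin.sum_univ_three]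
  simp only [wave] at hAc ⊢
  have dot_wave_vector (x : Fin 3 → ℝ) :
      Bs x ⬝ᵥ ![0, ky, kz] = ky * By (x 0) + kz * Bz (x 0) := by
    simp [hBs, mul_comm]
  have single_eq_smul (a : ℂ) : (Pi.single 0 a : Fin 3 → ℂ) = a • ![(1 : ℂ), 0, 0] := by
    ext i
    fin_cases i <;> simp
  have cross_curl (x : Fin 3 → ℝ) : crossC (Bs x) (curlC Ac x) =
      (I * deriv θ (x 0) * (ky * By (x 0) + kz * Bz (x 0)) * planeWave ![0, ky, kz] x) •
        ![(1 : ℂ), 0, 0] := by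
    rw [hAc, crossC_curlC_mul_planeWave_smul ((hθ (x 0)).const_mul I) _ (by simp [hBs]),
      deriv_const_mul_field, dot_wave_vector, single_eq_smul, smul_smul]
    congr 1
    ring
  have cross_curl_eq_zero_iff (x : Fin 3 → ℝ) : crossC (Bs x) (curlC Ac x) = 0 ↔
      deriv θ (x 0) * (ky * By (x 0) + kz * Bz (x 0)) = 0 := by
    simp [cross_curl, planeWave, exp_ne_zero]
  exact ⟨cross_curl, fun h s => (cross_curl_eq_zero_iff fun _ => s).mp (h _),
    fun h x => (cross_curl_eq_zero_iff x).mpr (h (x 0))⟩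

/-- For the slab field `B* = (0, B_y(x), B_z(x))` and the helical ansatz
`Ac = iθ(x) e^{i(k_y y + k_z z)} (0, k_y, k_z)`, one has
`B* × (∇×Ac) = iθ′(x) (k_y B_y(x) + k_z B_z(x)) e^{i(k_y y + k_z z)} (1,0,0)`;
consequently `B* × (∇×Ac) ≡ 0` iff `θ′(x)(k_y B_y(x) + k_z B_z(x)) = 0` for all `x`. -/
theorem slab_singular_casimir_determining_eq
    (By Bz θ : ℝ → ℝ)
    (hBy : ContDiff ℝ (⊤ : ℕ∞) By) (hBz : ContDiff ℝ (⊤ : ℕ∞) Bz) (hθ : ContDiff ℝ (⊤ : ℕ∞) θ)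
    (ky kz : ℝ)
    (Ac : (Fin 3 → ℝ) → (Fin 3 → ℂ))
    (hAc : Ac = fun x => (Complex.I * (θ (x 0) : ℂ) *
      Complex.exp (Complex.I * ((ky : ℂ) * (x 1 : ℂ) + (kz : ℂ) * (x 2 : ℂ)))) •
        ![(0 : ℂ), (ky : ℂ), (kz : ℂ)])
    (Bs : (Fin 3 → ℝ) → (Fin 3 → ℂ))
    (hBs : Bs = fun x => ![(0 : ℂ), (By (x 0) : ℂ), (Bz (x 0) : ℂ)]) :
    (∀ x : Fin 3 → ℝ,
      crossC (Bs x) (curlC Ac x) =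
        (Complex.I * ((deriv θ (x 0) : ℝ) : ℂ) *
            ((ky * By (x 0) + kz * Bz (x 0) : ℝ) : ℂ) *
            Complex.exp (Complex.I * ((ky : ℂ) * (x 1 : ℂ) + (kz : ℂ) * (x 2 : ℂ)))) •
          ![(1 : ℂ), 0, 0]) ∧
    ((∀ x : Fin 3 → ℝ, crossC (Bs x) (curlC Ac x) = 0) ↔
      ∀ s : ℝ, deriv θ s * (ky * By s + kz * Bz s) = 0) := by
  have hd : Differentiable ℝ θ := hθ.differentiable (by simp)
  have general := slab_singular_casimir_determining_eq_general (fun s => By s) (fun s => Bz s)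
    (fun s => θ s) (ofRealCLM.differentiable.comp hd) ky kz Ac hAc Bs hBs
  simp only [deriv_ofReal_comp (hd _)] at general
  exact_mod_cast general
end
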